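/- arXiv:1701.07101 — 4 statements merged into one kernel-verified Lean document; each statement's English description precedes it below -/
import Mathlib

section
/- Let d = (d_1, …, d_n) be a graphical degree sequence with d_min ≥ 1 and 3 ≤ d_max ≤ (1/3)·√M, and let Z ∈ Ω(d). Then for every q ∈ {1, 2, 3}, one has |C(0,q)| ≤ (9/8)·M^2·|C(0, q−1)|, where C(0,q) is the set of good encodings consistent with Z having no 2-defect edges and exactly q (−1)-defect edges. -/
/-!
Write `Δ` for the maximum degree. A switch of `L ∈ C(0,q)` uses a closed walk `x y b e c a` with
labels `-1, 1, 0, 1, 0, 1`: raising `xy`, `ac`, `be` by one and lowering `xa`, `yb`, `ce` by one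
keeps the row sums and destroys the (−1)-defect edge `xy`, so the result lies in `C(0,q-1)`. Count
the switches in two ways.

Each of the `2q` orientations of a (−1)-defect edge of `L` has 1-neighbours `a` of `x` and `b` of
`y`. Once these are chosen, each of the `M + 2q` ordered pairs `(c, e)` labelled 1 gives a switch,
unless `c` is `a` or meets `a` in a nonzero label, or likewise `e` and `b`. At most
`2((1 + Δ + 2q)Δ + 2q)` pairs are lost in this way, and `9Δ² ≤ M` leaves at least `M` switches
of `L`.

Conversely, a switch is determined by its result `L'` and the three raised pairs. Consistency makes
`xy` an edge of `Z`, and `ac`, `be` are labelled 1 in `L'`, so at most `M (M + 2(q - 1))²` switches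
result in `L'`. Hence `|C(0,q)| ≤ (M + 4)² |C(0,q-1)|`, and `(M + 4)² ≤ (9/8) M²` for `M ≥ 66`.
-/

open scoped Classical

noncomputable section

namespace SwitchChain

variable {n : ℕ}

/-- `Omega d` is the set of simple graphs on `[n] = Fin n` with degree sequence `d`. -/
def Omega (d : Fin n → ℕ) : Set (SimpleGraph (Fin n)) :=
  {G | ∀ v, {w | G.Adj v w}.ncard = d v}

/-- `M d` is the sum of the degrees. -/
def M (d : Fin n → ℕ) : ℕ := ∑ j, d j

/-- The maximum degree. -/
def dmax (d : Fin n → ℕ) : ℕ := Finset.univ.sup d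

/-- An encoding for the degree sequence `d`: a symmetric integer matrix with zero
diagonal, entries in `{-1, 0, 1, 2}`, and row sums `d`. -/
def IsEncoding (d : Fin n → ℕ) (L : Matrix (Fin n) (Fin n) ℤ) : Prop :=
  (∀ i j, L i j = L j i) ∧ (∀ i, L i i = 0) ∧
  (∀ i j, L i j = -1 ∨ L i j = 0 ∨ L i j = 1 ∨ L i j = 2) ∧
  (∀ i, ∑ j, L i j = (d i : ℤ))

/-- The set of (unordered) edges of `L` carrying the label `c`. -/
def labelEdges (L : Matrix (Fin n) (Fin n) ℤ) (c : ℤ) : Set (Sym2 (Fin n)) :=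
  {e | ∃ x y : Fin n, e = s(x, y) ∧ x ≠ y ∧ L x y = c}

/-- Every defect edge of `L` occurs, with its label, in the labelled edge set `D`. -/
def DefectsWithin (L : Matrix (Fin n) (Fin n) ℤ) (D : Set (Sym2 (Fin n) × ℤ)) : Prop :=
  ∀ x y : Fin n, x ≠ y → (L x y = 2 ∨ L x y = -1) → (s(x, y), L x y) ∈ D

/-- A valid encoding: at most four defect edges, forming a labelled subgraph of one
of the five possible configurations. -/
def ValidEncoding (d : Fin n → ℕ) (L : Matrix (Fin n) (Fin n) ℤ) : Prop :=
  IsEncoding d L ∧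
  (labelEdges L 2).ncard + (labelEdges L (-1)).ncard ≤ 4 ∧
  ∃ (a b c u e f : Fin n) (ℓ : ℤ), (ℓ = -1 ∨ ℓ = 2) ∧
    (([a, b, c, u].Pairwise (· ≠ ·) ∧ e ≠ f ∧
        e ∉ ({a, b, c, u} : Set (Fin n)) ∧ f ∉ ({a, b, c, u} : Set (Fin n)) ∧
        DefectsWithin L {(s(a, b), 2), (s(b, c), -1), (s(b, u), -1), (s(e, f), ℓ)}) ∨
     ([a, b, c, u, e].Pairwise (· ≠ ·) ∧
        DefectsWithin L {(s(a, b), 2), (s(b, c), -1), (s(b, u), -1), (s(u, e), ℓ)}) ∨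
     ([a, b, c, u, e].Pairwise (· ≠ ·) ∧
        DefectsWithin L {(s(a, b), -1), (s(b, c), -1), (s(b, u), 2), (s(u, e), ℓ)}) ∨
     ([a, b, c, u].Pairwise (· ≠ ·) ∧
        DefectsWithin L {(s(a, b), -1), (s(b, c), -1), (s(b, u), 2), (s(u, c), ℓ)}) ∨
     ([a, b, c, u].Pairwise (· ≠ ·) ∧
        DefectsWithin L {(s(a, b), 2), (s(b, c), -1), (s(b, u), -1), (s(u, c), ℓ)}))

/-- A good encoding: a valid encoding satisfying the degree conditions of
Lemma 2.3. -/
def GoodEncoding (d : Fin n → ℕ) (L : Matrix (Fin n) (Fin n) ℤ) : Prop :=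
  ValidEncoding d L ∧
  (∀ x y : Fin n, x ≠ y → L x y = 2 → 2 ≤ d x ∧ 2 ≤ d y) ∧
  (∀ x y z : Fin n, x ≠ y → y ≠ z → x ≠ z → L x y = 2 → L y z = 2 → 4 ≤ d y) ∧
  (∀ x y z : Fin n, x ≠ y → y ≠ z → x ≠ z → L x y = 2 → L y z = -1 → 3 ≤ d y)

/-- The 0-1 adjacency matrix of a simple graph, over `ℤ`. -/
def adjMat (Z : SimpleGraph (Fin n)) : Matrix (Fin n) (Fin n) ℤ :=
  fun i j => if Z.Adj i j then 1 else 0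

/-- `L` is consistent with `Z` if every entry of `L + Z` lies in `{0, 1, 2}`. -/
def ConsistentWith (L : Matrix (Fin n) (Fin n) ℤ) (Z : SimpleGraph (Fin n)) : Prop :=
  ∀ i j, L i j + adjMat Z i j = 0 ∨ L i j + adjMat Z i j = 1 ∨ L i j + adjMat Z i j = 2


/-- `C(p,q)`: the set of good encodings consistent with `Z` having exactly `p`
2-defect edges and exactly `q` (−1)-defect edges. -/
def Cset (d : Fin n → ℕ) (Z : SimpleGraph (Fin n)) (p q : ℕ) :
    Set (Matrix (Fin n) (Fin n) ℤ) :=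
  {L | GoodEncoding d L ∧ ConsistentWith L Z ∧
    (labelEdges L 2).ncard = p ∧ (labelEdges L (-1)).ncard = q}


section Counting

theorem card_mul_le_card_mul_of_injective {α β ι : Type*} {s : Finset α} {t : Finset β}
    {A : α → Finset ι} {B : β → Finset ι} {φ : ι → α → β} {k m : ℕ}
    (hφ : ∀ i, Function.Injective (φ i))
    (hmaps : ∀ a ∈ s, ∀ i ∈ A a, φ i a ∈ t ∧ i ∈ B (φ i a))
    (hA : ∀ a ∈ s, k ≤ (A a).card) (hB : ∀ b ∈ t, (B b).card ≤ m) :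
    s.card * k ≤ t.card * m := by
  calc s.card * k ≤ (s.sigma A).card := by
        simpa only [Finset.card_sigma, smul_eq_mul] using Finset.card_nsmul_le_sum s _ k hA
    _ ≤ (t.sigma B).card := by
        refine Finset.card_le_card_of_injOn (fun p => ⟨φ p.2 p.1, p.2⟩) ?_ ?_
        · intro p hp
          obtain ⟨ha, hi⟩ := Finset.mem_sigma.1 hp
          exact Finset.mem_sigma.2 (hmaps p.1 ha p.2 hi)
        · rintro ⟨a, i⟩ - ⟨a', i'⟩ - h
          obtain ⟨h, rfl⟩ : φ i a = φ i' a' ∧ i = i' := by simpa using h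
          rw [hφ i h]
    _ ≤ t.card * m := by
        simpa only [Finset.card_sigma, smul_eq_mul] using Finset.sum_le_card_nsmul t _ m hB

variable {V : Type*} [Fintype V] (G : SimpleGraph V) [DecidableRel G.Adj]

theorem card_interedges_univ_right (s : Finset V) :
    (G.interedges s Finset.univ).card = ∑ v ∈ s, G.degree v := by
  simp only [SimpleGraph.interedges_def, Finset.card_filter, Finset.sum_product,
    ← SimpleGraph.card_neighborFinset_eq_degree, SimpleGraph.neighborFinset_eq_filter]

theorem sum_degree_le_card_interedges_add [DecidableEq V] (s t : Finset V) :
    ∑ v, G.degree v ≤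
      (G.interedges s t).card + (∑ v ∈ sᶜ, G.degree v + ∑ v ∈ tᶜ, G.degree v) := by
  have hcover : G.interedges Finset.univ Finset.univ ⊆
      G.interedges s t ∪ (G.interedges sᶜ Finset.univ ∪ G.interedges Finset.univ tᶜ) := by
    intro p
    simp only [Finset.mem_union, SimpleGraph.mem_interedges_iff, Finset.mem_compl,
      Finset.mem_univ, true_and]
    tauto
  have hcomm : (G.interedges Finset.univ tᶜ).card = ∑ v ∈ tᶜ, G.degree v := by
    have : Std.Symm G.Adj := G.symm
    rw [← card_interedges_univ_right]
    exact Rel.card_interedges_comm _ _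
  rw [← hcomm, ← card_interedges_univ_right, ← card_interedges_univ_right]
  exact (Finset.card_le_card hcover).trans <| (Finset.card_union_le _ _).trans <|
    Nat.add_le_add_left (Finset.card_union_le _ _) _

end Counting

/-- The graph of the pairs of distinct vertices with label `c`. For a symmetric `L`, as in every
encoding, the symmetric closure in `SimpleGraph.fromRel` adds nothing. -/
def labelGraph (L : Matrix (Fin n) (Fin n) ℤ) (c : ℤ) : SimpleGraph (Fin n) :=
  SimpleGraph.fromRel fun i j => L i j = c

theorem ncard_labelEdges (L : Matrix (Fin n) (Fin n) ℤ) (c : ℤ) :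
    (labelEdges L c).ncard = (labelGraph L c).edgeFinset.card := by
  have h : labelEdges L c = (labelGraph L c).edgeSet := by
    ext e
    induction e with
    | _ i j =>
      simp only [labelEdges, Set.mem_ofPred_eq, SimpleGraph.mem_edgeSet, labelGraph,
        SimpleGraph.fromRel_adj]
      grind
  rw [h, ← SimpleGraph.coe_edgeFinset, Set.ncard_coe_finset]

/-- An encoding for `d` without 2-defect edges and with exactly `q` (−1)-defect edges. -/
structure IsSignedEncoding (d : Fin n → ℕ) (q : ℕ) (L : Matrix (Fin n) (Fin n) ℤ) : Prop where
  symm : ∀ i j, L i j = L j i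
  diag : ∀ i, L i i = 0
  label : ∀ i j, L i j = -1 ∨ L i j = 0 ∨ L i j = 1
  row_sum : ∀ i, ∑ j, L i j = d i
  ncard_neg : (labelEdges L (-1)).ncard = q

theorem ncard_labelEdges_two_eq_zero_iff {L : Matrix (Fin n) (Fin n) ℤ} (hdiag : ∀ i, L i i = 0) :
    (labelEdges L 2).ncard = 0 ↔ ∀ i j, L i j ≠ 2 := by
  rw [Set.ncard_eq_zero (Set.toFinite _), Set.eq_empty_iff_forall_notMem]
  constructor
  · intro h i j hij
    have hne : i ≠ j := by
      rintro rfl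
      simp [hdiag] at hij
    exact h _ ⟨i, j, rfl, hne, hij⟩
  · rintro h _ ⟨i, j, -, -, hij⟩
    exact h i j hij

theorem isSignedEncoding_of_mem_Cset {d : Fin n → ℕ} {Z : SimpleGraph (Fin n)} {q : ℕ}
    {L : Matrix (Fin n) (Fin n) ℤ} (hL : L ∈ Cset d Z 0 q) : IsSignedEncoding d q L := by
  obtain ⟨⟨⟨⟨hsymm, hdiag, hlabel, hrow⟩, -⟩, -⟩, -, htwo, hq⟩ := hL
  rw [ncard_labelEdges_two_eq_zero_iff hdiag] at htwo
  exact ⟨hsymm, hdiag, fun i j => by grind, hrow, hq⟩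

theorem adj_of_label_eq_neg_one {Z : SimpleGraph (Fin n)} {L : Matrix (Fin n) (Fin n) ℤ}
    (hL : ConsistentWith L Z) {i j : Fin n} (hij : L i j = -1) : Z.Adj i j := by
  by_contra hadj
  have := hL i j
  simp only [adjMat, if_neg hadj] at this
  omega

theorem mem_Cset_zero_of_neg_imp {d : Fin n → ℕ} {Z : SimpleGraph (Fin n)} {p q q' : ℕ}
    {L L' : Matrix (Fin n) (Fin n) ℤ} (hL : L ∈ Cset d Z p q) (hL' : IsSignedEncoding d q' L')
    (hneg : ∀ i j, L' i j = -1 → L i j = -1) : L' ∈ Cset d Z 0 q' := by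
  obtain ⟨⟨⟨-, hfour, a, b, c, u, e, f, ℓ, hℓ, hconf⟩, -⟩, hcons, -⟩ := hL
  have hne_two : ∀ i j, L' i j ≠ 2 := fun i j => by
    have := hL'.label i j
    omega
  have htwo := (ncard_labelEdges_two_eq_zero_iff hL'.diag).2 hne_two
  have hcard : (labelEdges L' (-1)).ncard ≤ (labelEdges L (-1)).ncard := by
    refine Set.ncard_le_ncard ?_ (Set.toFinite _)
    rintro _ ⟨i, j, rfl, hij, h⟩
    exact ⟨i, j, rfl, hij, hneg i j h⟩
  have hwithin {D} (hD : DefectsWithin L D) : DefectsWithin L' D := by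
    intro i j hij h
    have h' := h.resolve_left (hne_two i j)
    simpa only [h', hneg i j h'] using hD i j hij (.inr (hneg i j h'))
  have hvalid : ValidEncoding d L' :=
    ⟨⟨hL'.symm, hL'.diag, fun i j => by have := hL'.label i j; tauto, hL'.row_sum⟩, by omega,
      a, b, c, u, e, f, ℓ, hℓ,
      hconf.imp (And.imp_right (And.imp_right (And.imp_right (And.imp_right hwithin))))
        (.imp (And.imp_right hwithin) (.imp (And.imp_right hwithin)
          (.imp (And.imp_right hwithin) (And.imp_right hwithin))))⟩
  refine ⟨⟨hvalid, fun i j _ h => absurd h (hne_two i j),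
    fun i j _ _ _ _ h => absurd h (hne_two i j), fun i j _ _ _ _ h => absurd h (hne_two i j)⟩,
    fun i j => ?_, htwo, hL'.ncard_neg⟩
  have hlabel := hL'.label i j
  by_cases hadj : Z.Adj i j
  · simp only [adjMat, if_pos hadj]
    omega
  · have hne : L' i j ≠ -1 := fun h => hadj (adj_of_label_eq_neg_one hcons (hneg i j h))
    simp only [adjMat, if_neg hadj]
    omega

theorem finite_Cset (d : Fin n → ℕ) (Z : SimpleGraph (Fin n)) (p q : ℕ) :
    (Cset d Z p q).Finite := by
  have hfin : (Set.univ.pi fun _ => Set.univ.pi fun _ => {-1, 0, 1, 2} :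
      Set (Matrix (Fin n) (Fin n) ℤ)).Finite :=
    .pi fun _ => .pi fun _ => Set.toFinite _
  refine hfin.subset fun L hL i _ j _ => ?_
  obtain ⟨⟨⟨⟨-, -, hlabel, -⟩, -⟩, -⟩, -⟩ := hL
  exact hlabel i j

namespace IsSignedEncoding

variable {d : Fin n → ℕ} {q : ℕ} {L : Matrix (Fin n) (Fin n) ℤ}

theorem labelGraph_adj (h : IsSignedEncoding d q L) {c : ℤ} {i j : Fin n} :
    (labelGraph L c).Adj i j ↔ i ≠ j ∧ L i j = c := by
  rw [labelGraph, SimpleGraph.fromRel_adj, h.symm j i, or_self]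

theorem degree_labelGraph (h : IsSignedEncoding d q L) {c : ℤ} (hc : c ≠ 0) (i : Fin n) :
    (labelGraph L c).degree i = ({j | L i j = c} : Finset (Fin n)).card := by
  rw [← SimpleGraph.card_neighborFinset_eq_degree]
  congr 1
  ext j
  have hne : L i j = c → i ≠ j := by
    rintro hij rfl
    exact hc (hij.symm.trans (h.diag i))
  simpa [h.labelGraph_adj] using hne

theorem degree_labelGraph_one (h : IsSignedEncoding d q L) (i : Fin n) :
    (labelGraph L 1).degree i = d i + (labelGraph L (-1)).degree i := by
  have hsplit (j : Fin n) :
      L i j = (if L i j = 1 then 1 else 0) - (if L i j = -1 then 1 else 0) := by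
    rcases h.label i j with hij | hij | hij <;> simp [hij]
  have hrow := h.row_sum i
  rw [Finset.sum_congr rfl fun j _ => hsplit j, Finset.sum_sub_distrib, Finset.sum_boole,
    Finset.sum_boole] at hrow
  rw [h.degree_labelGraph one_ne_zero, h.degree_labelGraph (by decide)]
  omega

theorem exists_labelGraph_one_adj (h : IsSignedEncoding d q L) {x y : Fin n}
    (hxy : (labelGraph L (-1)).Adj x y) : ∃ a, (labelGraph L 1).Adj x a := by
  have hpos : 0 < (labelGraph L (-1)).degree x :=
    (SimpleGraph.degree_pos_iff_exists_adj _ x).2 ⟨y, hxy⟩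
  rw [← SimpleGraph.degree_pos_iff_exists_adj, h.degree_labelGraph_one]
  omega

theorem sum_degree_labelGraph_neg_one (h : IsSignedEncoding d q L) :
    ∑ i, (labelGraph L (-1)).degree i = 2 * q := by
  rw [SimpleGraph.sum_degrees_eq_twice_card_edges, ← ncard_labelEdges, h.ncard_neg]

theorem degree_labelGraph_neg_one_le (h : IsSignedEncoding d q L) (i : Fin n) :
    (labelGraph L (-1)).degree i ≤ q := by
  rw [← h.ncard_neg, ncard_labelEdges]
  exact SimpleGraph.degree_le_card_edgeFinset _ i

theorem sum_degree_labelGraph_one (h : IsSignedEncoding d q L) :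
    ∑ i, (labelGraph L 1).degree i = M d + 2 * q := by
  simp only [h.degree_labelGraph_one, Finset.sum_add_distrib, h.sum_degree_labelGraph_neg_one, M]

theorem card_compl_neighborFinset_zero_le (h : IsSignedEncoding d q L) (a : Fin n) :
    ((labelGraph L 0).neighborFinset a)ᶜ.card ≤ 1 + dmax d + 2 * q := by
  have hcover : ((labelGraph L 0).neighborFinset a)ᶜ ⊆ insert a
      ((labelGraph L 1).neighborFinset a ∪ (labelGraph L (-1)).neighborFinset a) := by
    intro c
    have := h.label a c
    simp only [Finset.mem_compl, Finset.mem_insert, Finset.mem_union,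
      SimpleGraph.mem_neighborFinset, h.labelGraph_adj]
    grind
  have hinsert := Finset.card_insert_le a
    ((labelGraph L 1).neighborFinset a ∪ (labelGraph L (-1)).neighborFinset a)
  have hunion := Finset.card_union_le
    ((labelGraph L 1).neighborFinset a) ((labelGraph L (-1)).neighborFinset a)
  have hda : d a ≤ dmax d := Finset.le_sup (Finset.mem_univ a)
  have hneg := h.degree_labelGraph_neg_one_le a
  have hone := h.degree_labelGraph_one a
  simp only [SimpleGraph.card_neighborFinset_eq_degree] at hunion
  have := Finset.card_le_card hcover
  omega

theorem sum_degree_labelGraph_one_le (h : IsSignedEncoding d q L) (s : Finset (Fin n)) :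
    ∑ i ∈ s, (labelGraph L 1).degree i ≤ s.card * dmax d + 2 * q := by
  simp only [h.degree_labelGraph_one, Finset.sum_add_distrib]
  refine Nat.add_le_add ?_ ?_
  · exact Finset.sum_le_card_nsmul s d _ fun i _ => Finset.le_sup (Finset.mem_univ i)
  · rw [← h.sum_degree_labelGraph_neg_one]
    exact Finset.sum_le_sum_of_subset (Finset.subset_univ s)

theorem le_card_interedges (h : IsSignedEncoding d q L) (a b : Fin n) :
    M d + 2 * q ≤
      ((labelGraph L 1).interedges ((labelGraph L 0).neighborFinset a)
        ((labelGraph L 0).neighborFinset b)).card +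
      2 * ((1 + dmax d + 2 * q) * dmax d + 2 * q) := by
  have hloss (v : Fin n) : ∑ i ∈ ((labelGraph L 0).neighborFinset v)ᶜ, (labelGraph L 1).degree i ≤
      (1 + dmax d + 2 * q) * dmax d + 2 * q :=
    (h.sum_degree_labelGraph_one_le _).trans <| Nat.add_le_add_right
      (Nat.mul_le_mul_right _ (h.card_compl_neighborFinset_zero_le v)) _
  have := sum_degree_le_card_interedges_add (labelGraph L 1)
    ((labelGraph L 0).neighborFinset a) ((labelGraph L 0).neighborFinset b)
  have := hloss a
  have := hloss b
  have := h.sum_degree_labelGraph_one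
  omega

end IsSignedEncoding

/-- `L` can be switched along the closed walk `x y b e c a`, whose labels are `-1, 1, 0, 1, 0, 1`.
The vertices `a` and `b` may coincide. -/
structure IsSwitchable (L : Matrix (Fin n) (Fin n) ℤ) (x y a b c e : Fin n) : Prop where
  adj_xy : (labelGraph L (-1)).Adj x y
  adj_xa : (labelGraph L 1).Adj x a
  adj_yb : (labelGraph L 1).Adj y b
  adj_ac : (labelGraph L 0).Adj a c
  adj_be : (labelGraph L 0).Adj b e
  adj_ce : (labelGraph L 1).Adj c e

/-- The effect of a switch along the closed walk `x y b e c a` on the labels. -/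
def switchChange (x y a b c e : Fin n) : Matrix (Fin n) (Fin n) ℤ :=
  adjMat (.edge x y) + adjMat (.edge a c) + adjMat (.edge b e) -
    (adjMat (.edge x a) + adjMat (.edge y b) + adjMat (.edge c e))

theorem adjMat_comm (Z : SimpleGraph (Fin n)) (i j : Fin n) : adjMat Z i j = adjMat Z j i :=
  if_congr (Z.adj_comm i j) rfl rfl

theorem adjMat_self (Z : SimpleGraph (Fin n)) (i : Fin n) : adjMat Z i i = 0 :=
  if_neg Z.irrefl

theorem sum_adjMat_edge {x y : Fin n} (hxy : x ≠ y) (i : Fin n) :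
    ∑ j, adjMat (.edge x y) i j = (if i = x then 1 else 0) + (if i = y then 1 else 0) := by
  have hterm (j : Fin n) : adjMat (.edge x y) i j =
      (if j = y then if i = x then 1 else 0 else 0) +
        (if j = x then if i = y then 1 else 0 else 0) := by
    simp only [adjMat, SimpleGraph.edge_adj]
    grind
  simp [hterm, Finset.sum_add_distrib]

section Switch

variable {d : Fin n → ℕ} {q : ℕ} {L : Matrix (Fin n) (Fin n) ℤ} {x y a b c e : Fin n}

theorem IsSignedEncoding.isSwitchable_iff (h : IsSignedEncoding d q L) :
    IsSwitchable L x y a b c e ↔ (x ≠ y ∧ L x y = -1) ∧ (x ≠ a ∧ L x a = 1) ∧ (y ≠ b ∧ L y b = 1) ∧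
      (a ≠ c ∧ L a c = 0) ∧ (b ≠ e ∧ L b e = 0) ∧ (c ≠ e ∧ L c e = 1) := by
  simp only [← h.labelGraph_adj]
  exact ⟨fun ⟨h₁, h₂, h₃, h₄, h₅, h₆⟩ => ⟨h₁, h₂, h₃, h₄, h₅, h₆⟩,
    fun ⟨h₁, h₂, h₃, h₄, h₅, h₆⟩ => ⟨h₁, h₂, h₃, h₄, h₅, h₆⟩⟩

theorem switchChange_self (i : Fin n) : switchChange x y a b c e i i = 0 := by
  simp only [switchChange, Matrix.add_apply, Matrix.sub_apply, adjMat_self, add_zero, sub_zero]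

theorem IsSignedEncoding.switched_pairs_ne (h : IsSignedEncoding d q L)
    (w : IsSwitchable L x y a b c e) :
    s(a, c) ≠ s(b, e) ∧ s(x, a) ≠ s(y, b) ∧ s(x, a) ≠ s(c, e) ∧ s(y, b) ≠ s(c, e) := by
  have hsymm := h.symm
  have hw := h.isSwitchable_iff.1 w
  simp only [ne_eq, Sym2.eq_iff]
  refine ⟨?_, ?_, ?_, ?_⟩ <;> grind

theorem IsSignedEncoding.switch_cases (h : IsSignedEncoding d q L) (w : IsSwitchable L x y a b c e)
    (i j : Fin n) :
    (s(i, j) = s(x, y) ∧ L i j = -1 ∧ (L + switchChange x y a b c e) i j = 0) ∨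
    ((s(i, j) = s(a, c) ∨ s(i, j) = s(b, e)) ∧ L i j = 0 ∧
      (L + switchChange x y a b c e) i j = 1) ∨
    (L i j = 1 ∧ (L + switchChange x y a b c e) i j = 0) ∨
    (s(i, j) ≠ s(x, y) ∧ s(i, j) ≠ s(a, c) ∧ s(i, j) ≠ s(b, e) ∧
      (L + switchChange x y a b c e) i j = L i j) := by
  obtain ⟨⟨hne_xy, hxy⟩, ⟨-, hxa⟩, ⟨-, hyb⟩, ⟨hne_ac, hac⟩, ⟨hne_be, hbe⟩, ⟨-, hce⟩⟩ :=
    h.isSwitchable_iff.1 w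
  rcases eq_or_ne i j with rfl | hij
  · have hloop {u v : Fin n} (huv : u ≠ v) : s(i, i) ≠ s(u, v) := by
      rw [ne_eq, Sym2.eq_iff]
      grind
    refine .inr (.inr (.inr ⟨hloop hne_xy, hloop hne_ac, hloop hne_be, ?_⟩))
    rw [Matrix.add_apply, switchChange_self, add_zero]
  have hne := h.switched_pairs_ne w
  have hlabel (u v : Fin n) (huv : s(u, v) = s(i, j)) : L i j = L u v := by
    rcases Sym2.eq_iff.1 huv with ⟨rfl, rfl⟩ | ⟨rfl, rfl⟩
    exacts [rfl, h.symm _ _]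
  simp only [switchChange, Matrix.add_apply, Matrix.sub_apply, adjMat, SimpleGraph.adj_edge, hij,
    ne_eq, not_false_eq_true, and_true]
  grind (splits := 40)

theorem IsSignedEncoding.add_switchChange (h : IsSignedEncoding d q L)
    (w : IsSwitchable L x y a b c e) :
    IsSignedEncoding d (q - 1) (L + switchChange x y a b c e) where
  symm i j := by
    simp only [switchChange, Matrix.add_apply, Matrix.sub_apply, h.symm i j, adjMat_comm _ i j]
  diag i := by rw [Matrix.add_apply, h.diag, switchChange_self, add_zero]
  label i j := by
    have := h.label i j
    have := h.switch_cases w i j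
    omega
  row_sum i := by
    simp only [switchChange, Matrix.add_apply, Matrix.sub_apply, Finset.sum_add_distrib,
      Finset.sum_sub_distrib, h.row_sum, sum_adjMat_edge w.adj_xy.ne, sum_adjMat_edge w.adj_xa.ne,
      sum_adjMat_edge w.adj_yb.ne, sum_adjMat_edge w.adj_ac.ne, sum_adjMat_edge w.adj_be.ne,
      sum_adjMat_edge w.adj_ce.ne]
    ring
  ncard_neg := by
    have hremove : labelEdges (L + switchChange x y a b c e) (-1) =
        labelEdges L (-1) \ {s(x, y)} := by
      have hlabel (i j : Fin n) : (L + switchChange x y a b c e) i j = -1 ↔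
          L i j = -1 ∧ s(i, j) ≠ s(x, y) := by
        have := h.switch_cases w i j
        grind
      ext f
      simp only [labelEdges, hlabel, Set.mem_ofPred_eq, Set.mem_sdiff, Set.mem_singleton_iff]
      grind
    have hmem : s(x, y) ∈ labelEdges L (-1) := ⟨x, y, rfl, h.labelGraph_adj.1 w.adj_xy⟩
    rw [hremove, Set.ncard_sdiff_singleton_of_mem hmem, h.ncard_neg]

end Switch

/-- The triples `((x, y), (a, c), (b, e))` of ordered pairs raised by the switches of `L`. -/
def switches (L : Matrix (Fin n) (Fin n) ℤ) :
    Finset ((Fin n × Fin n) × (Fin n × Fin n) × (Fin n × Fin n)) :=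
  {t | IsSwitchable L t.1.1 t.1.2 t.2.1.1 t.2.2.1 t.2.1.2 t.2.2.2}

theorem mem_switches {L : Matrix (Fin n) (Fin n) ℤ} {x y a b c e : Fin n} :
    ((x, y), (a, c), (b, e)) ∈ switches L ↔ IsSwitchable L x y a b c e := by
  simp only [switches, Finset.mem_filter_univ]

theorem IsSignedEncoding.le_card_switches {d : Fin n → ℕ} {q K : ℕ} {L : Matrix (Fin n) (Fin n) ℤ}
    (h : IsSignedEncoding d q L)
    (hK : ∀ a b, K ≤ ((labelGraph L 1).interedges ((labelGraph L 0).neighborFinset a)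
      ((labelGraph L 0).neighborFinset b)).card) :
    2 * q * K ≤ (switches L).card := by
  rw [mul_comm, ← h.sum_degree_labelGraph_neg_one, ← card_interedges_univ_right]
  refine Finset.mul_card_image_le_card_of_maps_to (f := Prod.fst) ?_ K ?_
  · rintro ⟨⟨x, y⟩, ⟨a, c⟩, b, e⟩ ht
    simpa [SimpleGraph.mem_interedges_iff] using (mem_switches.1 ht).adj_xy
  · rintro ⟨x, y⟩ hp
    have hxy : (labelGraph L (-1)).Adj x y := ((SimpleGraph.mem_interedges_iff _).1 hp).2.2
    obtain ⟨a, hxa⟩ := h.exists_labelGraph_one_adj hxy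
    obtain ⟨b, hyb⟩ := h.exists_labelGraph_one_adj hxy.symm
    refine (hK a b).trans <|
      Finset.card_le_card_of_injOn (fun r => ((x, y), (a, r.1), (b, r.2))) ?_ ?_
    · rintro ⟨c, e⟩ hr
      simp only [Finset.mem_coe, SimpleGraph.mem_interedges_iff,
        SimpleGraph.mem_neighborFinset] at hr
      exact Finset.mem_filter.2 ⟨mem_switches.2 ⟨hxy, hxa, hyb, hr.1, hr.2.1, hr.2.2⟩, rfl⟩
    · rintro ⟨c, e⟩ - ⟨c', e'⟩ - heq
      simpa using heq

theorem degree_eq_of_mem_Omega {d : Fin n → ℕ} {Z : SimpleGraph (Fin n)} (hZ : Z ∈ Omega d)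
    (v : Fin n) : Z.degree v = d v := by
  rw [← hZ v, ← SimpleGraph.card_neighborFinset_eq_degree, ← Set.ncard_coe_finset,
    SimpleGraph.coe_neighborFinset]
  rfl

theorem ncard_Cset_mul_le {d : Fin n → ℕ} {Z : SimpleGraph (Fin n)} (hZ : Z ∈ Omega d) {q k : ℕ}
    (hk : ∀ L ∈ Cset d Z 0 q, k ≤ (switches L).card) :
    (Cset d Z 0 q).ncard * k ≤
      (Cset d Z 0 (q - 1)).ncard * (M d * (M d + 2 * (q - 1)) ^ 2) := by
  rw [Set.ncard_eq_toFinset_card _ (finite_Cset d Z 0 q),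
    Set.ncard_eq_toFinset_card _ (finite_Cset d Z 0 (q - 1))]
  refine card_mul_le_card_mul_of_injective (A := switches)
    (B := fun L => Z.interedges Finset.univ Finset.univ ×ˢ
      ((labelGraph L 1).interedges Finset.univ Finset.univ ×ˢ
        (labelGraph L 1).interedges Finset.univ Finset.univ))
    (φ := fun t L => L + switchChange t.1.1 t.1.2 t.2.1.1 t.2.2.1 t.2.1.2 t.2.2.2)
    (fun t => add_left_injective _) ?_ (by simpa using hk) ?_
  · rintro L hL ⟨⟨x, y⟩, ⟨a, c⟩, b, e⟩ ht
    rw [Set.Finite.mem_toFinset] at hL ⊢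
    have h := isSignedEncoding_of_mem_Cset hL
    have w := mem_switches.1 ht
    have h' := h.add_switchChange w
    simp only [Finset.mem_product, SimpleGraph.mem_interedges_iff, Finset.mem_univ, true_and,
      h'.labelGraph_adj]
    have hxy := (h.labelGraph_adj.1 w.adj_xy).2
    have hac := (h.labelGraph_adj.1 w.adj_ac).2
    have hbe := (h.labelGraph_adj.1 w.adj_be).2
    refine ⟨mem_Cset_zero_of_neg_imp hL h' fun i j hij => ?_,
      adj_of_label_eq_neg_one hL.2.1 hxy, ⟨w.adj_ac.ne, ?_⟩, w.adj_be.ne, ?_⟩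
    · have := h.switch_cases w i j
      omega
    · have := h.switch_cases w a c
      grind
    · have := h.switch_cases w b e
      grind
  · intro L hL
    have h := isSignedEncoding_of_mem_Cset ((Set.Finite.mem_toFinset _).1 hL)
    simp only [Finset.card_product, card_interedges_univ_right, h.sum_degree_labelGraph_one,
      degree_eq_of_mem_Omega hZ, sq, M, le_refl]

theorem add_two_mul_loss_le {m Δ q : ℕ} (hm : 66 ≤ m) (hΔ : 9 * Δ ^ 2 ≤ m)
    (hq : q = 1 ∨ q = 2 ∨ q = 3) :
    m + 2 * q * (2 * ((1 + Δ + 2 * q) * Δ + 2 * q)) ≤ 2 * q * (m + 2 * q) := by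
  rcases le_or_gt Δ 2 with h | h
  · interval_cases Δ <;> rcases hq with rfl | rfl | rfl <;> omega
  · rcases hq with rfl | rfl | rfl <;> nlinarith

-- The largest `m` with `9 * m ^ 2 < 8 * (m + 4) ^ 2` is `65`, whence the bound `66`.
theorem eight_mul_add_sq_le {m q : ℕ} (hm : 66 ≤ m) (hq : q ≤ 3) :
    8 * (m + 2 * (q - 1)) ^ 2 ≤ 9 * m ^ 2 := by
  calc 8 * (m + 2 * (q - 1)) ^ 2 ≤ 8 * (m + 4) ^ 2 := by gcongr; omega
    _ ≤ 9 * m ^ 2 := by nlinarith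

theorem IsSignedEncoding.M_le_card_switches {d : Fin n → ℕ} {q : ℕ} {L : Matrix (Fin n) (Fin n) ℤ}
    (h : IsSignedEncoding d q L) (hM : 66 ≤ M d) (hΔ : 9 * dmax d ^ 2 ≤ M d)
    (hq : q = 1 ∨ q = 2 ∨ q = 3) : M d ≤ (switches L).card := by
  refine le_trans ?_ (h.le_card_switches fun a b =>
    Nat.sub_le_iff_le_add.2 (h.le_card_interedges a b))
  rw [Nat.mul_sub]
  exact Nat.le_sub_of_add_le (add_two_mul_loss_le hM hΔ hq)

theorem nine_mul_dmax_sq_le {d : Fin n → ℕ}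
    (h : (dmax d : ℝ) ≤ (1 / 3) * Real.sqrt (M d)) : 9 * dmax d ^ 2 ≤ M d := by
  have hsqrt : (3 * dmax d : ℝ) ≤ Real.sqrt (M d) := by linarith
  have hsq := (Real.le_sqrt (by positivity) (by positivity)).1 hsqrt
  rify
  linarith

theorem phase3_bound_general
    (d : Fin n → ℕ) (hM : 66 ≤ M d) (hΔ : 9 * dmax d ^ 2 ≤ M d)
    (Z : SimpleGraph (Fin n)) (hZ : Z ∈ Omega d) :
    ∀ q : ℕ, (q = 1 ∨ q = 2 ∨ q = 3) →
      ((Cset d Z 0 q).ncard : ℚ) ≤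
        (9 / 8 : ℚ) * (M d : ℚ) ^ 2 * ((Cset d Z 0 (q - 1)).ncard : ℚ) := by
  intro q hq
  set A := (Cset d Z 0 q).ncard
  set B := (Cset d Z 0 (q - 1)).ncard
  have hcount : A * M d ≤ B * (M d * (M d + 2 * (q - 1)) ^ 2) :=
    ncard_Cset_mul_le hZ fun L hL =>
      (isSignedEncoding_of_mem_Cset hL).M_le_card_switches hM hΔ hq
  have hcancel : A ≤ B * (M d + 2 * (q - 1)) ^ 2 := by
    refine Nat.le_of_mul_le_mul_right (hcount.trans_eq ?_) (by omega : 0 < M d)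
    ring
  have hexcess := eight_mul_add_sq_le hM (by omega : q ≤ 3)
  have hmain : 8 * A ≤ 9 * M d ^ 2 * B := by
    calc 8 * A ≤ B * (8 * (M d + 2 * (q - 1)) ^ 2) := by linarith
      _ ≤ B * (9 * M d ^ 2) := Nat.mul_le_mul_left B hexcess
      _ = 9 * M d ^ 2 * B := by ring
  have hmain' : (8 * A : ℚ) ≤ 9 * (M d : ℚ) ^ 2 * B := by exact_mod_cast hmain
  linarith

/-- Phase 3 bound: for `q ∈ {1, 2, 3}`, `|C(0,q)| ≤ (9/8) M² |C(0, q−1)|`. -/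
theorem phase3_bound
    (d : Fin n → ℕ) (hgraphical : (Omega d).Nonempty)
    (hdmin : ∀ v, 1 ≤ d v)
    (hdmax3 : 3 ≤ dmax d)
    (hdmaxM : (dmax d : ℝ) ≤ (1 / 3) * Real.sqrt (M d))
    (Z : SimpleGraph (Fin n)) (hZ : Z ∈ Omega d) :
    ∀ q : ℕ, (q = 1 ∨ q = 2 ∨ q = 3) →
      ((Cset d Z 0 q).ncard : ℚ) ≤
        (9 / 8 : ℚ) * (M d : ℚ) ^ 2 * ((Cset d Z 0 (q - 1)).ncard : ℚ) := by
  have hΔ := nine_mul_dmax_sq_le hdmaxM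
  exact phase3_bound_general d (by nlinarith) hΔ Z hZ

end SwitchChain
end
end

section
/- Suppose that ᵈ is a switch-irreducible digraphical directed degree sequence, and that G ∈ Ω(ᵈ) contains a set of three vertices U = {v_0, v_1, v_2} such that the induced digraph G[U] is a directed 3-cycle. Then there exists a useful neighbour or a useful arc for this 3-cycle. -/
/-!
If the cycle on `U` has no useful neighbour and no useful arc, give each vertex a row level `r`
recording the arcs it sends to `U` (`0` inside `U`, `1` if all are present, `-1` if none is) and
a column level `c` recording, in the same way, the arcs it receives from `U`. Then `0 ≤ r x + c y`
for every arc `(x, y)` and `r x + c y ≤ 0` for every non-arc. A switch trades two arcs for two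
non-arcs with the same total level, so all four pairs have level exactly `0`; hence the
inequalities survive the switch. If moreover one of the four pairs lies inside `U`, then all four
vertices have level `0`, that is, lie in `U`, which is too small to contain them. So no sequence of
switches changes the digraph induced on `U`. But reversing the cycle keeps all degrees, so
irreducibility would provide a sequence of switches that does.
-/

open scoped Classical

noncomputable section

namespace DirectedSwitchChain

variable {n : ℕ}

/-- `Omega dm dp` is the set of simple directed graphs on `[n] = Fin n` (arc sets,
with no loops) in which vertex `j` has in-degree `dm j` and out-degree `dp j`. -/
def Omega (dm dp : Fin n → ℕ) : Set (Set (Fin n × Fin n)) :=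
  {A | (∀ a ∈ A, a.1 ≠ a.2) ∧
       (∀ j, {w | (j, w) ∈ A}.ncard = dp j) ∧
       (∀ j, {w | (w, j) ∈ A}.ncard = dm j)}

/-- `A'` is obtained from `A` by a single directed switch. -/
def DSwitch (A A' : Set (Fin n × Fin n)) : Prop :=
  ∃ i j k l : Fin n,
    i ≠ j ∧ i ≠ k ∧ i ≠ l ∧ j ≠ k ∧ j ≠ l ∧ k ≠ l ∧
    (i, j) ∈ A ∧ (k, l) ∈ A ∧ (i, l) ∉ A ∧ (k, j) ∉ A ∧
    A' = (A \ {(i, j), (k, l)}) ∪ {(i, l), (k, j)}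

/-- `(dm, dp)` is switch-irreducible. -/
def SwitchIrreducible (dm dp : Fin n → ℕ) : Prop :=
  ∀ A ∈ Omega dm dp, ∀ A' ∈ Omega dm dp, Relation.ReflTransGen DSwitch A A'

/-- `U⁰`: vertices outside `U` with no arcs to or from `U`. -/
def U0 (A : Set (Fin n × Fin n)) (U : Set (Fin n)) : Set (Fin n) :=
  {x | x ∉ U ∧ ∀ u ∈ U, (x, u) ∉ A ∧ (u, x) ∉ A}

/-- `U⁻`: vertices outside `U` with all arcs to `U` present and none from `U`. -/
def Uminus (A : Set (Fin n × Fin n)) (U : Set (Fin n)) : Set (Fin n) :=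
  {x | x ∉ U ∧ (∀ u ∈ U, (x, u) ∈ A) ∧ ∀ u ∈ U, (u, x) ∉ A}

/-- `U⁺`: vertices outside `U` with no arcs to `U` and all arcs from `U` present. -/
def Uplus (A : Set (Fin n × Fin n)) (U : Set (Fin n)) : Set (Fin n) :=
  {x | x ∉ U ∧ (∀ u ∈ U, (x, u) ∉ A) ∧ ∀ u ∈ U, (u, x) ∈ A}

/-- `U^±`: vertices outside `U` with all arcs to and from `U` present. -/
def Upm (A : Set (Fin n × Fin n)) (U : Set (Fin n)) : Set (Fin n) :=
  {x | x ∉ U ∧ ∀ u ∈ U, (x, u) ∈ A ∧ (u, x) ∈ A}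

/-- The induced subdigraph of `A` on `{v0, v1, v2}` is the directed 3-cycle
`v0 → v1 → v2 → v0`. -/
def IsTriangle (A : Set (Fin n × Fin n)) (v0 v1 v2 : Fin n) : Prop :=
  v0 ≠ v1 ∧ v0 ≠ v2 ∧ v1 ≠ v2 ∧
  {p | p ∈ A ∧ p.1 ∈ ({v0, v1, v2} : Set (Fin n)) ∧ p.2 ∈ ({v0, v1, v2} : Set (Fin n))}
    = ({(v0, v1), (v1, v2), (v2, v0)} : Set (Fin n × Fin n))

/-- `x` is a useful neighbour for the directed 3-cycle on `U`. -/
def UsefulNeighbour (A : Set (Fin n × Fin n)) (U : Set (Fin n)) (x : Fin n) : Prop :=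
  x ∉ U ∧ x ∉ U0 A U ∪ Uminus A U ∪ Uplus A U ∪ Upm A U

/-- `(x, y)` is a useful arc for the directed 3-cycle on `U`. -/
def UsefulArc (A : Set (Fin n × Fin n)) (U : Set (Fin n)) (x y : Fin n) : Prop :=
  x ≠ y ∧
  (((x, y) ∈ A ∧ x ∈ U0 A U ∪ Uplus A U ∧ y ∈ U0 A U ∪ Uminus A U) ∨
   ((x, y) ∉ A ∧ x ∈ Uminus A U ∪ Upm A U ∧ y ∈ Uplus A U ∪ Upm A U))

section Reversal

variable {V : Type*} {A : Set (V × V)} {U : Set V}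

/-- The digraph `A` with every arc inside `U` reversed. -/
def reverseOn (A : Set (V × V)) (U : Set V) : Set (V × V) :=
  {p | if p.1 ∈ U ∧ p.2 ∈ U then p.swap ∈ A else p ∈ A}

/-- The digraph induced by `A` on `U` is balanced: each of its vertices has equal out-degree and
in-degree in it. This is what makes `reverseOn A U` have the degrees of `A`. -/
def IsBalancedOn (A : Set (V × V)) (U : Set V) : Prop :=
  ∀ u ∈ U, {w ∈ U | (u, w) ∈ A}.ncard = {w ∈ U | (w, u) ∈ A}.ncard

theorem mk_mem_reverseOn_of_mem {u w : V} (hu : u ∈ U) (hw : w ∈ U) :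
    (u, w) ∈ reverseOn A U ↔ (w, u) ∈ A := by
  simp [reverseOn, hu, hw]

theorem IsBalancedOn.swap (h : IsBalancedOn A U) : IsBalancedOn (Prod.swap ⁻¹' A) U :=
  fun u hu => (h u hu).symm

theorem swap_preimage_reverseOn :
    Prod.swap ⁻¹' reverseOn A U = reverseOn (Prod.swap ⁻¹' A) U := by
  ext ⟨x, y⟩
  simp [reverseOn, and_comm]

theorem IsBalancedOn.ncard_out_reverseOn [Finite V] (h : IsBalancedOn A U) (x : V) :
    {w | (x, w) ∈ reverseOn A U}.ncard = {w | (x, w) ∈ A}.ncard := by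
  by_cases hx : x ∈ U
  · rw [← Set.ncard_inter_add_ncard_sdiff_eq_ncard {w | (x, w) ∈ reverseOn A U} U,
      ← Set.ncard_inter_add_ncard_sdiff_eq_ncard {w | (x, w) ∈ A} U]
    have hin : {w | (x, w) ∈ reverseOn A U} ∩ U = {w ∈ U | (w, x) ∈ A} := by
      ext w
      simp +contextual [reverseOn, hx, and_comm]
    have hout : {w | (x, w) ∈ reverseOn A U} \ U = {w | (x, w) ∈ A} \ U := by
      ext w
      simp +contextual [reverseOn]
    have hinter : {w | (x, w) ∈ A} ∩ U = {w ∈ U | (x, w) ∈ A} := Set.inter_comm _ _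
    rw [hin, hout, hinter, h x hx]
  · simp [reverseOn, hx]

theorem IsBalancedOn.ncard_in_reverseOn [Finite V] (h : IsBalancedOn A U) (x : V) :
    {w | (w, x) ∈ reverseOn A U}.ncard = {w | (w, x) ∈ A}.ncard := by
  have := h.swap.ncard_out_reverseOn x
  rwa [← swap_preimage_reverseOn] at this

end Reversal

theorem reverseOn_mem_Omega {dm dp : Fin n → ℕ} {A : Set (Fin n × Fin n)} {U : Set (Fin n)}
    (hA : A ∈ Omega dm dp) (hbal : IsBalancedOn A U) : reverseOn A U ∈ Omega dm dp := by
  obtain ⟨hloop, hout, hin⟩ := hA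
  refine ⟨?_, fun j => (hbal.ncard_out_reverseOn j).trans (hout j),
    fun j => (hbal.ncard_in_reverseOn j).trans (hin j)⟩
  rintro ⟨x, y⟩ hxy (rfl : x = y)
  exact hloop (x, x) (by simpa [reverseOn] using hxy) rfl

namespace IsTriangle

variable {A : Set (Fin n × Fin n)} {v0 v1 v2 : Fin n}

theorem rotate (h : IsTriangle A v0 v1 v2) : IsTriangle A v1 v2 v0 := by
  obtain ⟨h01, h02, h12, hE⟩ := h
  refine ⟨h12, h01.symm, h02.symm, ?_⟩
  grind

theorem setOf_out_eq (h : IsTriangle A v0 v1 v2) :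
    {w ∈ ({v0, v1, v2} : Set (Fin n)) | (v0, w) ∈ A} = {v1} := by
  obtain ⟨h01, h02, -, hE⟩ := h
  ext w
  have := Set.ext_iff.1 hE (v0, w)
  grind

theorem setOf_in_eq (h : IsTriangle A v0 v1 v2) :
    {w ∈ ({v0, v1, v2} : Set (Fin n)) | (w, v0) ∈ A} = {v2} := by
  obtain ⟨h01, h02, h12, hE⟩ := h
  ext w
  have := Set.ext_iff.1 hE (w, v0)
  grind

theorem isBalancedOn (h : IsTriangle A v0 v1 v2) : IsBalancedOn A {v0, v1, v2} := by
  have hfirst : ∀ {a b c : Fin n}, IsTriangle A a b c →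
      {w ∈ ({a, b, c} : Set (Fin n)) | (a, w) ∈ A}.ncard =
        {w ∈ ({a, b, c} : Set (Fin n)) | (w, a) ∈ A}.ncard := fun h => by
    rw [h.setOf_out_eq, h.setOf_in_eq, Set.ncard_singleton, Set.ncard_singleton]
  have hrot : ∀ a b c : Fin n, ({a, b, c} : Set (Fin n)) = {b, c, a} := by grind
  rintro u (rfl | rfl | rfl)
  · exact hfirst h
  · rw [hrot]
    exact hfirst h.rotate
  · rw [hrot, hrot]
    exact hfirst h.rotate.rotate

theorem not_arc_mem_iff_mem_reverseOn (h : IsTriangle A v0 v1 v2) :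
    ¬ ((v0, v1) ∈ A ↔ (v0, v1) ∈ reverseOn A {v0, v1, v2}) := by
  have hmem : v1 ∈ {w ∈ ({v0, v1, v2} : Set (Fin n)) | (v0, w) ∈ A} := h.setOf_out_eq ▸ rfl
  have hnotMem : (v1, v0) ∉ A := fun hA =>
    h.2.2.1 (h.setOf_in_eq.subset ⟨by simp, hA⟩)
  rw [mk_mem_reverseOn_of_mem (by simp) (by simp)]
  exact fun hiff => hnotMem (hiff.1 hmem.2)

theorem ncard_eq_three (h : IsTriangle A v0 v1 v2) : ({v0, v1, v2} : Set (Fin n)).ncard = 3 :=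
  Set.ncard_eq_three.2 ⟨v0, v1, v2, h.1, h.2.1, h.2.2.1, rfl⟩

end IsTriangle

section Levels

variable {α : Type*} [AddCommGroup α] [LinearOrder α] [IsOrderedAddMonoid α]
  {r c : Fin n → α} {A B : Set (Fin n × Fin n)} {U : Set (Fin n)}

/-- The row levels `r` and column levels `c` separate the arcs of `A` from its non-arcs, weakly and
with threshold `0`. This is the invariant of the switch chain behind the theorem; pairs `(x, x)` are
left out because no switch involves them. -/
structure LevelCompatible (r c : Fin n → α) (A : Set (Fin n × Fin n)) : Prop where
  nonneg_of_mem : ∀ x y, x ≠ y → (x, y) ∈ A → 0 ≤ r x + c y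
  nonpos_of_notMem : ∀ x y, x ≠ y → (x, y) ∉ A → r x + c y ≤ 0

theorem LevelCompatible.add_eq_zero_of_alternating (h : LevelCompatible r c A) {i j k l : Fin n}
    (hij : i ≠ j) (hil : i ≠ l) (hkj : k ≠ j) (hkl : k ≠ l)
    (mij : (i, j) ∈ A) (mkl : (k, l) ∈ A) (mil : (i, l) ∉ A) (mkj : (k, j) ∉ A) :
    r i + c j = 0 ∧ r k + c l = 0 ∧ r i + c l = 0 ∧ r k + c j = 0 := by
  have nij := h.nonneg_of_mem i j hij mij
  have nkl := h.nonneg_of_mem k l hkl mkl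
  have nil := h.nonpos_of_notMem i l hil mil
  have nkj := h.nonpos_of_notMem k j hkj mkj
  grind

theorem LevelCompatible.of_dSwitch (h : LevelCompatible r c A) (hAB : DSwitch A B) :
    LevelCompatible r c B := by
  obtain ⟨i, j, k, l, hij, -, hil, hjk, -, hkl, mij, mkl, mil, mkj, rfl⟩ := hAB
  obtain ⟨zij, zkl, zil, zkj⟩ :=
    h.add_eq_zero_of_alternating hij hil hjk.symm hkl mij mkl mil mkj
  constructor
  · rintro x y hxy ((⟨hA, -⟩ | hnew) : _ ∨ _)
    · exact h.nonneg_of_mem x y hxy hA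
    · have hadded : x = i ∧ y = l ∨ x = k ∧ y = j := by grind
      rcases hadded with ⟨rfl, rfl⟩ | ⟨rfl, rfl⟩
      exacts [zil.ge, zkj.ge]
  · intro x y hxy hB
    by_cases hA : (x, y) ∈ A
    · have hremoved : x = i ∧ y = j ∨ x = k ∧ y = l := by grind
      rcases hremoved with ⟨rfl, rfl⟩ | ⟨rfl, rfl⟩
      exacts [zij.le, zkl.le]
    · exact h.nonpos_of_notMem x y hxy hA

theorem LevelCompatible.mem_iff_of_dSwitch (h : LevelCompatible r c A)
    (hr : ∀ x, r x = 0 ↔ x ∈ U) (hc : ∀ x, c x = 0 ↔ x ∈ U) (hU : U.ncard ≤ 3)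
    (hAB : DSwitch A B) {u w : Fin n} (hu : u ∈ U) (hw : w ∈ U) :
    (u, w) ∈ A ↔ (u, w) ∈ B := by
  obtain ⟨i, j, k, l, hij, hik, hil, hjk, hjl, hkl, mij, mkl, mil, mkj, rfl⟩ := hAB
  obtain ⟨zij, zkl, zil, -⟩ :=
    h.add_eq_zero_of_alternating hij hil hjk.symm hkl mij mkl mil mkj
  have hiff : ∀ x y, r x + c y = 0 → (x ∈ U ↔ y ∈ U) := by
    intro x y hxy
    rw [← hr, ← hc, eq_neg_of_add_eq_zero_left hxy, neg_eq_zero]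
  have hi : i ∉ U := by
    intro hi
    have hsub : ({i, j, k, l} : Set (Fin n)) ⊆ U := by grind
    have hcard : ({i, j, k, l} : Set (Fin n)).ncard = 4 := by
      simp [Set.ncard_insert_of_notMem, *]
    have := Set.ncard_le_ncard hsub
    omega
  have hj : j ∉ U := (hiff i j zij).not.1 hi
  have hl : l ∉ U := (hiff i l zil).not.1 hi
  grind

theorem LevelCompatible.mem_iff_of_reflTransGen (h : LevelCompatible r c A)
    (hr : ∀ x, r x = 0 ↔ x ∈ U) (hc : ∀ x, c x = 0 ↔ x ∈ U) (hU : U.ncard ≤ 3)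
    (hAB : Relation.ReflTransGen DSwitch A B) {u w : Fin n} (hu : u ∈ U) (hw : w ∈ U) :
    (u, w) ∈ A ↔ (u, w) ∈ B := by
  induction hAB using Relation.ReflTransGen.head_induction_on with
  | refl => rfl
  | head hstep _ ih =>
    exact (h.mem_iff_of_dSwitch hr hc hU hstep hu hw).trans (ih (h.of_dSwitch hstep))

end Levels

section UsefulLevels

variable {A B : Set (Fin n × Fin n)} {U : Set (Fin n)}

/-- The row level of `x`: whether `x` sends arcs to all (`1`) or to none (`-1`) of the vertices of
`U`, with `0` for the vertices of `U` themselves. The value `-1` is meaningful only if `x` is not a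
useful neighbour. -/
def rowLevel (A : Set (Fin n × Fin n)) (U : Set (Fin n)) (x : Fin n) : ℤ :=
  if x ∈ U then 0 else if x ∈ Uminus A U ∪ Upm A U then 1 else -1

/-- The column level of `y`: the analogue of `rowLevel` for the arcs that `y` receives from `U`. -/
def colLevel (A : Set (Fin n × Fin n)) (U : Set (Fin n)) (y : Fin n) : ℤ :=
  if y ∈ U then 0 else if y ∈ Uplus A U ∪ Upm A U then 1 else -1

theorem rowLevel_eq_zero_iff (x : Fin n) : rowLevel A U x = 0 ↔ x ∈ U := by
  grind [rowLevel]

theorem colLevel_eq_zero_iff (y : Fin n) : colLevel A U y = 0 ↔ y ∈ U := by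
  grind [colLevel]

theorem rowLevel_eq_neg_one_or_eq_one {x : Fin n} (hnbr : ¬ UsefulNeighbour A U x) (hx : x ∉ U) :
    (rowLevel A U x = -1 ∧ x ∈ U0 A U ∪ Uplus A U ∧ ∀ u ∈ U, (x, u) ∉ A) ∨
    (rowLevel A U x = 1 ∧ x ∈ Uminus A U ∪ Upm A U ∧ ∀ u ∈ U, (x, u) ∈ A) := by
  by_cases hsend : x ∈ Uminus A U ∪ Upm A U
  · refine .inr ⟨by simp only [rowLevel, if_neg hx, if_pos hsend], hsend, fun u hu => ?_⟩
    exact hsend.elim (fun h => h.2.1 u hu) (fun h => (h.2 u hu).1)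
  · have hnone : x ∈ U0 A U ∪ Uplus A U := by grind [UsefulNeighbour]
    refine .inl ⟨by simp only [rowLevel, if_neg hx, if_neg hsend], hnone, fun u hu => ?_⟩
    exact hnone.elim (fun h => (h.2 u hu).1) (fun h => h.2.1 u hu)

theorem colLevel_eq_neg_one_or_eq_one {y : Fin n} (hnbr : ¬ UsefulNeighbour A U y) (hy : y ∉ U) :
    (colLevel A U y = -1 ∧ y ∈ U0 A U ∪ Uminus A U ∧ ∀ u ∈ U, (u, y) ∉ A) ∨
    (colLevel A U y = 1 ∧ y ∈ Uplus A U ∪ Upm A U ∧ ∀ u ∈ U, (u, y) ∈ A) := by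
  by_cases hrecv : y ∈ Uplus A U ∪ Upm A U
  · refine .inr ⟨by simp only [colLevel, if_neg hy, if_pos hrecv], hrecv, fun u hu => ?_⟩
    exact hrecv.elim (fun h => h.2.2 u hu) (fun h => (h.2 u hu).2)
  · have hnone : y ∈ U0 A U ∪ Uminus A U := by grind [UsefulNeighbour]
    refine .inl ⟨by simp only [colLevel, if_neg hy, if_neg hrecv], hnone, fun u hu => ?_⟩
    exact hnone.elim (fun h => (h.2 u hu).2) (fun h => h.2.2 u hu)

theorem levelCompatible_of_forall_not_useful (hnbr : ∀ x, ¬ UsefulNeighbour A U x)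
    (harc : ∀ x y, ¬ UsefulArc A U x y) :
    LevelCompatible (rowLevel A U) (colLevel A U) A := by
  constructor <;> intro x y hxy hA
  all_goals
    have hrow := rowLevel_eq_neg_one_or_eq_one (hnbr x)
    have hcol := colLevel_eq_neg_one_or_eq_one (hnbr y)
    have hpair := harc x y
    have hrow_zero := rowLevel_eq_zero_iff (A := A) (U := U) x
    have hcol_zero := colLevel_eq_zero_iff (A := A) (U := U) y
    grind [UsefulArc]

theorem triangle_has_useful_neighbour_or_arc_general (hU : U.ncard ≤ 3)
    (hAB : Relation.ReflTransGen DSwitch A B) {u w : Fin n} (hu : u ∈ U) (hw : w ∈ U)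
    (hne : ¬ ((u, w) ∈ A ↔ (u, w) ∈ B)) :
    (∃ x, UsefulNeighbour A U x) ∨ (∃ x y, UsefulArc A U x y) := by
  by_contra! ⟨hnbr, harc⟩
  exact hne <| (levelCompatible_of_forall_not_useful hnbr harc).mem_iff_of_reflTransGen
    rowLevel_eq_zero_iff colLevel_eq_zero_iff hU hAB hu hw

end UsefulLevels

/-- Lemma 3.2: for a switch-irreducible degree sequence, every directed 3-cycle in a
digraph of `Omega dm dp` has a useful neighbour or a useful arc. -/
theorem triangle_has_useful_neighbour_or_arc
    (dm dp : Fin n → ℕ)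
    (hdigraphical : (Omega dm dp).Nonempty)
    (hirr : SwitchIrreducible dm dp)
    (A : Set (Fin n × Fin n)) (hA : A ∈ Omega dm dp)
    (v0 v1 v2 : Fin n) (htri : IsTriangle A v0 v1 v2) :
    (∃ x, UsefulNeighbour A {v0, v1, v2} x) ∨
    (∃ x y, UsefulArc A {v0, v1, v2} x y) :=
  triangle_has_useful_neighbour_or_arc_general htri.ncard_eq_three.le
    (hirr A hA _ (reverseOn_mem_Omega hA htri.isBalancedOn)) (u := v0) (w := v1)
    (by simp) (by simp) htri.not_arc_mem_iff_mem_reverseOn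

end DirectedSwitchChain
end
end

section
/- Let ᵈ be a digraphical directed degree sequence. The directed switch chain M(ᵈ) fails to be irreducible if and only if for every G ∈ Ω(ᵈ) there exists a vertex subset U = {v_0, v_1, v_2} such that G[U] is a directed 3-cycle, the four sets U^0, U^-, U^+, U^± form a partition of [n]\U, and in addition: (U1) no arc from a vertex of U^0 ∪ U^+ to a vertex of U^0 ∪ U^- is present in G, and (U2) every ordered pair (x,y) of distinct vertices with x ∈ U^- ∪ U^± and y ∈ U^+ ∪ U^± is an arc of G. -/
/-!
Call a triple `U` an *anchor* if it satisfies the conditions on the outside vertices. Give an arc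
`(x, y)` a row weight depending on `x` plus a column weight depending on `y`, where the weights are
`1` or `-1` for outside vertices, according to whether they send arcs to `U` (for rows) or receive
arcs from `U` (for columns), and `0` on `U`. An anchored digraph contains all arcs of positive and
none of negative weight, so it has maximal total weight. As the total depends only on the degrees,
every digraph with the same degrees is maximal too, hence has the same arcs of nonzero weight: the
anchor persists, as does its 3-cycle up to orientation. A switch cannot change the arcs inside an
anchored triple, whereas reversing the 3-cycle preserves the degrees.

Conversely, three or four switches reverse a 3-cycle whose vertex set is not an anchor. Let `A` and
`B` have the same degrees and assume that no switch of either brings them closer together. Start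
from a vertex with the fewest outgoing arcs in `A \ B`, among those that have any. Following the
differences from there produces a 3-cycle of `A` whose reverse lies in `B`. If `A` is not anchored,
reversing this cycle brings `A` closer to `B`.
-/

open scoped Classical

noncomputable section

namespace DirectedSwitchChain

variable {n : ℕ}

open scoped symmDiff

section Cardinality

variable {α : Type*} {s t : Set α}

lemma ncard_symmDiff_pair {u v : α} (hu : u ∈ s) (hv : v ∉ s) : (s ∆ {u, v}).ncard = s.ncard := by
  have hst : s ∆ {u, v} = insert v (s \ {u}) := by ext z; grind
  rw [hst, Set.ncard_exchange hv hu]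

lemma ncard_symmDiff_lt [Finite α] (h : (t \ s).ncard < (s ∩ t).ncard) :
    (s ∆ t).ncard < s.ncard := by
  have hunion : (s ∆ t).ncard ≤ (s \ t).ncard + (t \ s).ncard := Set.ncard_union_le _ _
  have hs := Set.ncard_inter_add_ncard_sdiff_eq_ncard s t
  lia

lemma exists_mem_notMem_of_ncard_eq [Finite α] (h : s.ncard = t.ncard) {x : α} (hxs : x ∈ s)
    (hxt : x ∉ t) : ∃ y ∈ t, y ∉ s := by
  rw [Set.ncard_eq_ncard_iff_ncard_sdiff_eq_ncard_sdiff] at h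
  have hpos : 0 < (t \ s).ncard := h ▸ (Set.ncard_pos).2 ⟨x, hxs, hxt⟩
  exact (Set.ncard_pos).1 hpos

lemma mem_iff_notMem_of_ncard_eq [Finite α] (h : s.ncard = t.ncard) {u v : α}
    (hout : ∀ z, z = u ∨ z = v ∨ (z ∈ s ↔ z ∈ t)) (hu : u ∈ s) (hv : v ∉ s) :
    u ∈ t ↔ v ∉ t := by
  constructor
  · intro hut hvt
    obtain ⟨z, hzs, hzt⟩ := exists_mem_notMem_of_ncard_eq h.symm hvt hv
    have := hout z
    grind
  · intro hvt
    by_contra hut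
    obtain ⟨z, hzt, hzs⟩ := exists_mem_notMem_of_ncard_eq h hu hut
    have := hout z
    grind

end Cardinality

section Degrees

variable {α β : Type*} {A B C T : SetRel α β}

/-- Equality of degree sequences, for relations between possibly different types: corresponding
rows and columns of the two adjacency matrices contain equally many ones. -/
structure SameDegrees (A B : SetRel α β) : Prop where
  ncard_row : ∀ x, {y | (x, y) ∈ A}.ncard = {y | (x, y) ∈ B}.ncard
  ncard_col : ∀ y, {x | (x, y) ∈ A}.ncard = {x | (x, y) ∈ B}.ncard

lemma SameDegrees.symm (h : SameDegrees A B) : SameDegrees B A :=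
  ⟨fun x => (h.ncard_row x).symm, fun y => (h.ncard_col y).symm⟩

lemma SameDegrees.trans (hAB : SameDegrees A B) (hBC : SameDegrees B C) : SameDegrees A C :=
  ⟨fun x => (hAB.ncard_row x).trans (hBC.ncard_row x),
    fun y => (hAB.ncard_col y).trans (hBC.ncard_col y)⟩

lemma SameDegrees.inv (h : SameDegrees A B) : SameDegrees A.inv B.inv :=
  ⟨h.ncard_col, h.ncard_row⟩

lemma SameDegrees.exists_row [Finite β] (h : SameDegrees A B) {x : α} {y : β} (hA : (x, y) ∈ A)
    (hB : (x, y) ∉ B) : ∃ z, (x, z) ∈ B ∧ (x, z) ∉ A :=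
  exists_mem_notMem_of_ncard_eq (h.ncard_row x) hA hB

lemma SameDegrees.exists_col [Finite α] (h : SameDegrees A B) {x : α} {y : β} (hA : (x, y) ∈ A)
    (hB : (x, y) ∉ B) : ∃ z, (z, y) ∈ B ∧ (z, y) ∉ A :=
  exists_mem_notMem_of_ncard_eq (h.ncard_col y) hA hB

/-- Every nonempty row of `T` consists of one element of `A` and one non-element, so that toggling
`T` in `A` preserves the size of each row. -/
def RowsAlternate (A T : SetRel α β) : Prop :=
  ∀ x, {y | (x, y) ∈ T} = ∅ ∨ ∃ u v, (x, u) ∈ A ∧ (x, v) ∉ A ∧ {y | (x, y) ∈ T} = {u, v}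

lemma RowsAlternate.ncard_row (h : RowsAlternate A T) (x : α) :
    {y | (x, y) ∈ A}.ncard = {y | (x, y) ∈ A ∆ T}.ncard := by
  change _ = ({y | (x, y) ∈ A} ∆ {y | (x, y) ∈ T}).ncard
  rcases h x with hT | ⟨u, v, hu, hv, hT⟩
  · rw [hT, ← Set.bot_eq_empty, symmDiff_bot]
  · rw [hT, ncard_symmDiff_pair (s := {y | (x, y) ∈ A}) hu hv]

lemma RowsAlternate.sameDegrees (hrow : RowsAlternate A T) (hcol : RowsAlternate A.inv T.inv) :
    SameDegrees A (A ∆ T) :=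
  ⟨hrow.ncard_row, hcol.ncard_row⟩

/-- The combinatorial rectangle with rows `i`, `k` and columns `j`, `l`. Exchanging arcs
`(i, j), (k, l)` for `(i, l), (k, j)` amounts to taking the symmetric difference with it. -/
def rectangle (i k : α) (j l : β) : SetRel α β := ({i, k} : Set α) ×ˢ ({j, l} : Set β)

@[grind =] lemma mem_rectangle {i k x : α} {j l y : β} :
    (x, y) ∈ rectangle i k j l ↔ (x = i ∨ x = k) ∧ (y = j ∨ y = l) := Iff.rfl

lemma rectangle_comm_right (i k : α) (j l : β) : rectangle i k l j = rectangle i k j l := by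
  rw [rectangle, Set.pair_comm l j, rectangle]

lemma rectangle_inv (i k : α) (j l : β) :
    (rectangle i k j l).inv = rectangle j l i k := by
  simp only [rectangle, SetRel.inv, Set.preimage_swap_prod]

lemma rowsAlternate_rectangle {i k : α} {j l : β} (hij : (i, j) ∈ A) (hkl : (k, l) ∈ A)
    (hil : (i, l) ∉ A) (hkj : (k, j) ∉ A) : RowsAlternate A (rectangle i k j l) := by
  intro x
  by_cases hi : x = i
  · exact .inr ⟨j, l, hi ▸ hij, hi ▸ hil, by ext y; simp [mem_rectangle, hi]⟩
  by_cases hk : x = k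
  · exact .inr ⟨l, j, hk ▸ hkl, hk ▸ hkj, by ext y; simp [mem_rectangle, hk, or_comm]⟩
  · exact .inl (by ext y; simp [mem_rectangle, hi, hk])

variable {M : Type*} [AddCommGroup M] {r : α → M} {c : β → M}

lemma sum_weight_eq_sum_ncard_smul [Fintype α] [Fintype β] (A : SetRel α β) (r : α → M)
    (c : β → M) :
    ∑ p : α × β, (if p ∈ A then r p.1 + c p.2 else 0) =
      ∑ x, {y | (x, y) ∈ A}.ncard • r x + ∑ y, {x | (x, y) ∈ A}.ncard • c y := by
  have hrow (x : α) : ∑ y, (if (x, y) ∈ A then r x else 0) = {y | (x, y) ∈ A}.ncard • r x := by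
    rw [← Finset.sum_filter, Finset.sum_const, Set.ncard_eq_toFinset_card', Set.toFinset_ofPred]
  have hcol (y : β) : ∑ x, (if (x, y) ∈ A then c y else 0) = {x | (x, y) ∈ A}.ncard • c y := by
    rw [← Finset.sum_filter, Finset.sum_const, Set.ncard_eq_toFinset_card', Set.toFinset_ofPred]
  simp only [ite_add_zero, Finset.sum_add_distrib]
  rw [Fintype.sum_prod_type, Fintype.sum_prod_type_right]
  simp only [hrow, hcol]

-- The total row-plus-column weight depends only on the degrees. The hypotheses make `A` at least
-- as heavy as `B` at every pair, so equality of the totals forces equality at every pair.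
lemma SameDegrees.mem_iff_mem_of_weight [Finite α] [Finite β] [LinearOrder M]
    [IsOrderedAddMonoid M] (h : SameDegrees A B)
    (hpos : ∀ x y, 0 < r x + c y → (x, y) ∈ B → (x, y) ∈ A)
    (hneg : ∀ x y, r x + c y < 0 → (x, y) ∈ A → (x, y) ∈ B)
    {x : α} {y : β} (hxy : r x + c y ≠ 0) : (x, y) ∈ A ↔ (x, y) ∈ B := by
  have := Fintype.ofFinite α
  have := Fintype.ofFinite β
  let weight (C : SetRel α β) (p : α × β) : M := if p ∈ C then r p.1 + c p.2 else 0
  have hle : ∀ p ∈ Finset.univ, weight B p ≤ weight A p := by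
    rintro ⟨x, y⟩ -
    have := hpos x y
    have := hneg x y
    grind
  have htotal : ∑ p, weight B p = ∑ p, weight A p := by
    simp only [weight, sum_weight_eq_sum_ncard_smul, h.ncard_row, h.ncard_col]
  have heq := (Finset.sum_eq_sum_iff_of_le hle).1 htotal (x, y) (Finset.mem_univ _)
  grind

end Degrees

section AlternatingPair

variable {V : Type*} {P Q : SetRel V V}

/-- Whenever three corners of a rectangle lie alternately in `P`, `Q`, `P`, the fourth corner lies
in `P`, unless it is on the diagonal. -/
def FillsCorners (P Q : SetRel V V) : Prop :=
  ∀ ⦃r s c d⦄, (r, c) ∈ P → (s, c) ∈ Q → (s, d) ∈ P → r ≠ d → (r, d) ∈ P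

/-- The situation of the two differences `P = G \ H` and `Q = H \ G` of digraphs with the same
degrees and loops, when no switch of `G` or of `H` brings the two closer together. -/
structure IsAlternatingPair (P Q : SetRel V V) : Prop where
  irrefl : ∀ x, (x, x) ∉ P
  disjoint : ∀ x y, (x, y) ∈ P → (x, y) ∉ Q
  exists_row : ∀ x y, (x, y) ∈ Q → ∃ z, (x, z) ∈ P
  exists_col : ∀ x y, (x, y) ∈ P → ∃ z, (z, y) ∈ Q
  fillsCorners_left : FillsCorners P Q
  fillsCorners_right : FillsCorners Q P

/-- The row of `r` in `P` has the fewest elements among the nonempty rows. -/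
def IsMinimalRow (P : SetRel V V) (r : V) : Prop :=
  MinimalFor (fun x => ∃ y, (x, y) ∈ P) (fun x => {y | (x, y) ∈ P}.ncard) r

namespace IsAlternatingPair

variable [Finite V] {r s t c : V}

lemma row_eq_insert (h : IsAlternatingPair P Q) (hr : IsMinimalRow P r) (hrc : (r, c) ∈ P)
    (hsc : (s, c) ∈ Q) : {y | (s, y) ∈ P} = insert r ({y | (r, y) ∈ P} \ {c}) := by
  have hsub : {y | (s, y) ∈ P} ⊆ insert r ({y | (r, y) ∈ P} \ {c}) := by
    intro y hsy
    by_cases hyr : y = r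
    · exact .inl hyr
    · refine .inr ⟨h.fillsCorners_left hrc hsc hsy (Ne.symm hyr), ?_⟩
      rintro rfl
      exact h.disjoint _ _ hsy hsc
  refine Set.eq_of_subset_of_ncard_le hsub ?_
  rw [Set.ncard_exchange (s := {y | (r, y) ∈ P}) (h.irrefl r) hrc]
  exact (le_total _ _).elim id (hr.2 (h.exists_row _ _ hsc))

lemma mem_of_isMinimalRow (h : IsAlternatingPair P Q) (hr : IsMinimalRow P r) (hrc : (r, c) ∈ P)
    (hsc : (s, c) ∈ Q) : (s, r) ∈ P :=
  (h.row_eq_insert hr hrc hsc).ge (Set.mem_insert _ _)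

lemma isMinimalRow (h : IsAlternatingPair P Q) (hr : IsMinimalRow P r) (hrc : (r, c) ∈ P)
    (hsc : (s, c) ∈ Q) : IsMinimalRow P s := by
  have hcard : {y | (s, y) ∈ P}.ncard = {y | (r, y) ∈ P}.ncard := by
    rw [h.row_eq_insert hr hrc hsc, Set.ncard_exchange (s := {y | (r, y) ∈ P}) (h.irrefl r) hrc]
  refine ⟨h.exists_row _ _ hsc, fun x hx _ => ?_⟩
  exact hcard.le.trans ((le_total _ _).elim id (hr.2 hx))

lemma eq_of_isMinimalRow (h : IsAlternatingPair P Q) (hr : IsMinimalRow P r) (hrc : (r, c) ∈ P)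
    (hsc : (s, c) ∈ Q) (htr : (t, r) ∈ Q) : t = c := by
  by_contra htc
  have htc' : (t, c) ∈ Q := h.fillsCorners_right htr (h.mem_of_isMinimalRow hr hrc hsc) hsc htc
  exact h.disjoint _ _ (h.mem_of_isMinimalRow hr hrc htc') htr

lemma exists_triangle (h : IsAlternatingPair P Q) (hP : ∃ x y, (x, y) ∈ P) :
    ∃ a b c, (a, b) ∈ P ∧ (b, c) ∈ P ∧ (c, a) ∈ P ∧ (b, a) ∈ Q ∧ (c, b) ∈ Q ∧ (a, c) ∈ Q := by
  obtain ⟨a, ha⟩ : ∃ a, IsMinimalRow P a := exists_minimalFor_of_wellFoundedLT _ _ hP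
  obtain ⟨b, hab⟩ := ha.1
  obtain ⟨c, hcb⟩ := h.exists_col _ _ hab
  have hc := h.isMinimalRow ha hab hcb
  have hca := h.mem_of_isMinimalRow ha hab hcb
  have hba : (b, a) ∈ Q := by
    obtain ⟨t, hta⟩ := h.exists_col _ _ hca
    exact h.eq_of_isMinimalRow ha hab hcb hta ▸ hta
  have hbc := h.mem_of_isMinimalRow hc hca hba
  have hac : (a, c) ∈ Q := by
    obtain ⟨t, htc⟩ := h.exists_col _ _ hbc
    exact h.eq_of_isMinimalRow hc hca hba htc ▸ htc
  exact ⟨a, b, c, hab, hbc, hca, hba, hcb, hac⟩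

end IsAlternatingPair

end AlternatingPair

section Anchor

variable {V : Type*} {A B C : SetRel V V} {U : Set V} {a b c : V}

/-- The vertices are distinct and `A` induces on them, loops aside, the directed cycle
`a → b → c → a`. Allowing loops makes the notion stable under complementation. -/
structure IsCyclicTriple (A : SetRel V V) (a b c : V) : Prop where
  ne_ab : a ≠ b
  ne_bc : b ≠ c
  ne_ca : c ≠ a
  ab_mem : (a, b) ∈ A
  bc_mem : (b, c) ∈ A
  ca_mem : (c, a) ∈ A
  ba_notMem : (b, a) ∉ A
  cb_notMem : (c, b) ∉ A
  ac_notMem : (a, c) ∉ A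

lemma triple_rotate (a b c : V) : ({b, c, a} : Set V) = {a, b, c} := by
  rw [Set.pair_comm, Set.insert_comm, Set.pair_comm, Set.insert_comm, Set.pair_comm]

lemma offDiag_inv (U : Set V) : SetRel.inv U.offDiag = U.offDiag := by
  ext ⟨x, y⟩
  simp only [SetRel.mem_inv, Set.mem_offDiag, ne_comm, and_left_comm]

namespace IsCyclicTriple

lemma rotate (h : IsCyclicTriple A a b c) : IsCyclicTriple A b c a :=
  ⟨h.ne_bc, h.ne_ca, h.ne_ab, h.bc_mem, h.ca_mem, h.ab_mem, h.cb_notMem, h.ac_notMem, h.ba_notMem⟩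

lemma exists_eq_of_mem (h : IsCyclicTriple A a b c) {u : V} (hu : u ∈ ({a, b, c} : Set V)) :
    ∃ v w, IsCyclicTriple A u v w ∧ ({u, v, w} : Set V) = {a, b, c} := by
  rcases hu with rfl | rfl | rfl
  · exact ⟨b, c, h, rfl⟩
  · exact ⟨c, a, h.rotate, triple_rotate _ _ _⟩
  · exact ⟨a, b, h.rotate.rotate, (triple_rotate _ _ _).symm⟩

lemma compl (h : IsCyclicTriple A a b c) : IsCyclicTriple Aᶜ a c b :=
  ⟨h.ne_ca.symm, h.ne_bc.symm, h.ne_ab.symm, h.ac_notMem, h.cb_notMem, h.ba_notMem,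
    not_not.2 h.ca_mem, not_not.2 h.bc_mem, not_not.2 h.ab_mem⟩

lemma inv (h : IsCyclicTriple A a b c) : IsCyclicTriple A.inv a c b :=
  ⟨h.ne_ca.symm, h.ne_bc.symm, h.ne_ab.symm, h.ca_mem, h.bc_mem, h.ab_mem,
    h.ac_notMem, h.cb_notMem, h.ba_notMem⟩

lemma rowsAlternate_offDiag (h : IsCyclicTriple A a b c) :
    RowsAlternate A ({a, b, c} : Set V).offDiag := by
  have hstart {x y z : V} (h : IsCyclicTriple A x y z) : (x, y) ∈ A ∧ (x, z) ∉ A ∧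
      {w | (x, w) ∈ ({x, y, z} : Set V).offDiag} = {y, z} := by
    refine ⟨h.ab_mem, h.ac_notMem, ?_⟩
    ext w
    have := h.ne_ab
    have := h.ne_ca
    simp only [Set.mem_ofPred_eq, Set.mem_offDiag, Set.mem_insert_iff, Set.mem_singleton_iff]
    grind
  intro x
  by_cases hx : x ∈ ({a, b, c} : Set V)
  · obtain ⟨v, w, hx, hU⟩ := h.exists_eq_of_mem hx
    exact .inr ⟨v, w, hU ▸ hstart hx⟩
  · exact .inl (Set.eq_empty_of_forall_notMem fun y hy => hx hy.1)

end IsCyclicTriple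

/-- Equality of the degree sequences and of the loops of two digraphs on the same vertices. -/
structure DegreeEquiv (A B : SetRel V V) : Prop extends SameDegrees A B where
  loop_mem_iff : ∀ x, (x, x) ∈ A ↔ (x, x) ∈ B

namespace DegreeEquiv

lemma refl (A : SetRel V V) : DegreeEquiv A A :=
  ⟨⟨fun _ => rfl, fun _ => rfl⟩, fun _ => .rfl⟩

lemma symm (h : DegreeEquiv A B) : DegreeEquiv B A :=
  ⟨h.toSameDegrees.symm, fun x => (h.loop_mem_iff x).symm⟩

lemma trans (hAB : DegreeEquiv A B) (hBC : DegreeEquiv B C) : DegreeEquiv A C :=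
  ⟨hAB.toSameDegrees.trans hBC.toSameDegrees,
    fun x => (hAB.loop_mem_iff x).trans (hBC.loop_mem_iff x)⟩

lemma inv (h : DegreeEquiv A B) : DegreeEquiv A.inv B.inv :=
  ⟨h.toSameDegrees.inv, h.loop_mem_iff⟩

end DegreeEquiv

lemma IsCyclicTriple.degreeEquiv_symmDiff_offDiag (h : IsCyclicTriple A a b c) :
    DegreeEquiv A (A ∆ ({a, b, c} : Set V).offDiag) where
  toSameDegrees := by
    refine h.rowsAlternate_offDiag.sameDegrees ?_
    rw [offDiag_inv, Set.pair_comm]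
    exact h.inv.rowsAlternate_offDiag
  loop_mem_iff x := by simp [Set.mem_symmDiff]

/-- The conditions of LaMar's theorem on the vertices outside `U`, in a pointwise form: arcs between
an outside vertex and `U` are all present or all absent, and an arc between outside vertices `x`,
`y` is forced to be absent, or present, if both `x` sends and `y` receives no arcs, or all arcs, to
and from `U`. -/
structure IsAnchor (A : SetRel V V) (U : Set V) : Prop where
  out_mem : ∀ x ∉ U, ∀ u ∈ U, ∀ v ∈ U, (x, u) ∈ A → (x, v) ∈ A
  in_mem : ∀ x ∉ U, ∀ u ∈ U, ∀ v ∈ U, (u, x) ∈ A → (v, x) ∈ A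
  notMem : ∀ x ∉ U, ∀ y ∉ U, x ≠ y → ∀ u ∈ U, (x, u) ∉ A → (u, y) ∉ A → (x, y) ∉ A
  mem : ∀ x ∉ U, ∀ y ∉ U, x ≠ y → ∀ u ∈ U, (x, u) ∈ A → (u, y) ∈ A → (x, y) ∈ A

lemma IsAnchor.inv (h : IsAnchor A U) : IsAnchor A.inv U where
  out_mem := h.in_mem
  in_mem := h.out_mem
  notMem x hx y hy hxy u hu hxu huy := h.notMem y hy x hx hxy.symm u hu huy hxu
  mem x hx y hy hxy u hu hxu huy := h.mem y hy x hx hxy.symm u hu huy hxu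

/-- The row weight of a vertex relative to an anchor: whether `(x, y)` with `x ≠ y` is an arc is
forced by the degrees if the row weight of `x` plus the column weight of `y`, which is the row
weight in `A.inv`, is nonzero. -/
def anchorWeight (A : SetRel V V) (U : Set V) (x : V) : ℤ :=
  if x ∈ U then 0 else if ∀ u ∈ U, (x, u) ∈ A then 1 else -1

namespace IsAnchor

lemma anchorWeight_of_notMem (h : IsAnchor A U) {x u : V} (hx : x ∉ U) (hu : u ∈ U) :
    anchorWeight A U x = if (x, u) ∈ A then 1 else -1 := by
  have hiff : (∀ v ∈ U, (x, v) ∈ A) ↔ (x, u) ∈ A :=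
    ⟨fun hv => hv u hu, fun hxu v hv => h.out_mem x hx u hu v hv hxu⟩
  simp only [anchorWeight, if_neg hx, hiff]

lemma mem_iff_mem_of_anchorWeight [Finite V] (h : IsAnchor A U) (hAB : DegreeEquiv A B)
    (hU : U.Nonempty) {x y : V}
    (hxy : anchorWeight A U x + anchorWeight A.inv U y ≠ 0) : (x, y) ∈ A ↔ (x, y) ∈ B := by
  obtain ⟨u, hu⟩ := hU
  have hmem (x : V) (hx : x ∈ U) (C : SetRel V V) : anchorWeight C U x = 0 := if_pos hx
  have hrow {x : V} := h.anchorWeight_of_notMem (x := x) (hu := hu)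
  have hcol {x : V} := h.inv.anchorWeight_of_notMem (x := x) (hu := hu)
  have hforced {x y : V} (hne : x ≠ y) (hx : x ∉ U) (hy : y ∉ U) :=
    And.intro (h.mem x hx y hy hne u hu) (h.notMem x hx y hy hne u hu)
  refine hAB.mem_iff_mem_of_weight (fun x y hpos hB => ?_) (fun x y hneg hA => ?_) hxy
  all_goals
    rcases eq_or_ne x y with rfl | hne
    · have := hAB.loop_mem_iff x
      tauto
    have hxU := h.out_mem x
    have hyU := h.in_mem y
    simp only [SetRel.mem_inv] at hcol
    by_cases hx : x ∈ U <;> by_cases hy : y ∈ U <;> grind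

lemma out_mem_iff [Finite V] (h : IsAnchor A U) (hAB : DegreeEquiv A B) {x u : V}
    (hx : x ∉ U) (hu : u ∈ U) : (x, u) ∈ A ↔ (x, u) ∈ B := by
  refine h.mem_iff_mem_of_anchorWeight hAB ⟨u, hu⟩ ?_
  rw [h.anchorWeight_of_notMem hx hu, anchorWeight, if_pos hu]
  split_ifs <;> decide

lemma in_mem_iff [Finite V] (h : IsAnchor A U) (hAB : DegreeEquiv A B) {x u : V}
    (hx : x ∉ U) (hu : u ∈ U) : (u, x) ∈ A ↔ (u, x) ∈ B :=
  h.inv.out_mem_iff hAB.inv hx hu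

lemma of_degreeEquiv [Finite V] (h : IsAnchor A U) (hAB : DegreeEquiv A B) : IsAnchor B U := by
  have hout {x u} (hx : x ∉ U) (hu : u ∈ U) := h.out_mem_iff hAB hx hu
  have hin {x u} (hx : x ∉ U) (hu : u ∈ U) := h.in_mem_iff hAB hx hu
  have houter {x y u} (hx : x ∉ U) (hy : y ∉ U) (hu : u ∈ U) (hxy : (x, u) ∈ B ↔ (u, y) ∈ B) :
      (x, y) ∈ A ↔ (x, y) ∈ B := by
    refine h.mem_iff_mem_of_anchorWeight hAB ⟨u, hu⟩ ?_
    rw [h.anchorWeight_of_notMem hx hu, h.inv.anchorWeight_of_notMem hy hu]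
    have := hout hx hu
    have := hin hy hu
    simp only [SetRel.mem_inv]
    grind
  refine ⟨?_, ?_, ?_, ?_⟩
  · intro x hx u hu v hv hxu
    exact (hout hx hv).1 (h.out_mem x hx u hu v hv ((hout hx hu).2 hxu))
  · intro x hx u hu v hv hux
    exact (hin hx hv).1 (h.in_mem x hx u hu v hv ((hin hx hu).2 hux))
  · intro x hx y hy hxy u hu hxu huy
    rw [← houter hx hy hu (by tauto)]
    exact h.notMem x hx y hy hxy u hu (mt (hout hx hu).1 hxu) (mt (hin hy hu).1 huy)
  · intro x hx y hy hxy u hu hxu huy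
    rw [← houter hx hy hu (by tauto)]
    exact h.mem x hx y hy hxy u hu ((hout hx hu).2 hxu) ((hin hy hu).2 huy)

end IsAnchor

lemma IsCyclicTriple.mem_iff_notMem_of_degreeEquiv [Finite V] (h : IsCyclicTriple A a b c)
    (hAB : DegreeEquiv A B) (hanchor : IsAnchor A {a, b, c}) : (a, b) ∈ B ↔ (a, c) ∉ B := by
  refine mem_iff_notMem_of_ncard_eq (hAB.ncard_row a) (fun z => ?_) h.ab_mem h.ac_notMem
  have hz (hz : z ∉ ({a, b, c} : Set V)) := hanchor.in_mem_iff hAB hz (.inl rfl)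
  have := hAB.loop_mem_iff a
  grind

lemma IsCyclicTriple.or_of_degreeEquiv [Finite V] (h : IsCyclicTriple A a b c)
    (hAB : DegreeEquiv A B) (hanchor : IsAnchor A {a, b, c}) :
    IsCyclicTriple B a b c ∨ IsCyclicTriple B a c b := by
  have hout {x y z : V} (hxyz : IsCyclicTriple A x y z) (hU : ({x, y, z} : Set V) = {a, b, c}) :
      (x, y) ∈ B ↔ (x, z) ∉ B :=
    hxyz.mem_iff_notMem_of_degreeEquiv hAB (hU ▸ hanchor)
  have hin {x y z : V} (hxyz : IsCyclicTriple A x y z) (hU : ({x, y, z} : Set V) = {a, b, c}) :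
      (z, x) ∈ B ↔ (y, x) ∉ B :=
    hxyz.inv.mem_iff_notMem_of_degreeEquiv hAB.inv
      (Set.pair_comm y z ▸ (hU ▸ hanchor).inv)
  have ha := hout h rfl
  have hb := hout h.rotate (triple_rotate _ _ _)
  have hc := hout h.rotate.rotate (triple_rotate _ _ _).symm
  have ha' := hin h rfl
  have hb' := hin h.rotate (triple_rotate _ _ _)
  by_cases hab : (a, b) ∈ B
  · exact .inl ⟨h.ne_ab, h.ne_bc, h.ne_ca, by tauto, by tauto, by tauto, by tauto, by tauto,
      by tauto⟩
  · exact .inr ⟨h.ne_ca.symm, h.ne_bc.symm, h.ne_ab.symm, by tauto, by tauto, by tauto, by tauto,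
      by tauto, by tauto⟩

/-- LaMar's anchored digraphs: those with a directed 3-cycle on the vertices of an anchor. -/
def IsAnchored (A : SetRel V V) : Prop :=
  ∃ a b c, IsCyclicTriple A a b c ∧ IsAnchor A {a, b, c}

lemma IsAnchored.of_degreeEquiv [Finite V] (h : IsAnchored A) (hAB : DegreeEquiv A B) :
    IsAnchored B := by
  obtain ⟨a, b, c, hcyc, hanchor⟩ := h
  have hanchor' := hanchor.of_degreeEquiv hAB
  rcases hcyc.or_of_degreeEquiv hAB hanchor with hcyc' | hcyc'
  · exact ⟨a, b, c, hcyc', hanchor'⟩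
  · exact ⟨a, c, b, hcyc', Set.pair_comm b c ▸ hanchor'⟩

end Anchor

section Switch

variable {V : Type*} {A B : SetRel V V} {i j k l : V}

/-- The arcs `(i, j)` and `(k, l)` of `A` may be exchanged for `(i, l)` and `(k, j)`. -/
structure CanSwitch (A : SetRel V V) (i j k l : V) : Prop where
  nodup : [i, j, k, l].Nodup
  ij_mem : (i, j) ∈ A
  kl_mem : (k, l) ∈ A
  il_notMem : (i, l) ∉ A
  kj_notMem : (k, j) ∉ A

/-- `B` arises from `A` by a single switch. -/
def IsSwitch (A B : SetRel V V) : Prop :=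
  ∃ i j k l, CanSwitch A i j k l ∧ B = A ∆ rectangle i k j l

/-- `B` arises from `A` by finitely many switches. -/
def SwitchReachable : SetRel V V → SetRel V V → Prop :=
  Relation.ReflTransGen IsSwitch

lemma compl_symmDiff_eq_compl_symmDiff {α : Type*} (s t : Set α) : (s ∆ t)ᶜ = sᶜ ∆ t := by
  ext x
  simp only [Set.mem_compl_iff, Set.mem_symmDiff]
  tauto

namespace CanSwitch

lemma compl (h : CanSwitch A i j k l) : CanSwitch Aᶜ i l k j where
  nodup := by have := h.nodup; grind
  ij_mem := h.il_notMem
  kl_mem := h.kj_notMem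
  il_notMem := not_not.2 h.ij_mem
  kj_notMem := not_not.2 h.kl_mem

lemma inv (h : CanSwitch A i j k l) : CanSwitch A.inv j i l k where
  nodup := by have := h.nodup; grind
  ij_mem := h.ij_mem
  kl_mem := h.kl_mem
  il_notMem := h.kj_notMem
  kj_notMem := h.il_notMem

lemma symmDiff_rectangle (h : CanSwitch A i j k l) :
    CanSwitch (A ∆ rectangle i k j l) i l k j where
  nodup := h.compl.nodup
  ij_mem := .inr ⟨⟨.inl rfl, .inr rfl⟩, h.il_notMem⟩
  kl_mem := .inr ⟨⟨.inr rfl, .inl rfl⟩, h.kj_notMem⟩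
  il_notMem hmem := hmem.elim (fun hA => hA.2 ⟨.inl rfl, .inl rfl⟩) fun hA => hA.2 h.ij_mem
  kj_notMem hmem := hmem.elim (fun hA => hA.2 ⟨.inr rfl, .inr rfl⟩) fun hA => hA.2 h.kl_mem

lemma rowsAlternate (h : CanSwitch A i j k l) : RowsAlternate A (rectangle i k j l) :=
  rowsAlternate_rectangle h.ij_mem h.kl_mem h.il_notMem h.kj_notMem

lemma degreeEquiv (h : CanSwitch A i j k l) : DegreeEquiv A (A ∆ rectangle i k j l) where
  toSameDegrees := by
    refine h.rowsAlternate.sameDegrees ?_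
    rw [rectangle_inv]
    exact h.inv.rowsAlternate
  loop_mem_iff x := by
    have := h.nodup
    grind

lemma switchReachable (h : CanSwitch A i j k l) : SwitchReachable A (A ∆ rectangle i k j l) :=
  .single ⟨i, j, k, l, h, rfl⟩

end CanSwitch

namespace IsSwitch

lemma symm (h : IsSwitch A B) : IsSwitch B A := by
  obtain ⟨i, j, k, l, hA, rfl⟩ := h
  refine ⟨i, l, k, j, hA.symmDiff_rectangle, ?_⟩
  rw [rectangle_comm_right, symmDiff_symmDiff_cancel_right]

lemma compl (h : IsSwitch A B) : IsSwitch Aᶜ Bᶜ := by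
  obtain ⟨i, j, k, l, hA, rfl⟩ := h
  refine ⟨i, l, k, j, hA.compl, ?_⟩
  rw [rectangle_comm_right, compl_symmDiff_eq_compl_symmDiff]

lemma inv (h : IsSwitch A B) : IsSwitch A.inv B.inv := by
  obtain ⟨i, j, k, l, hA, rfl⟩ := h
  refine ⟨j, i, l, k, hA.inv, ?_⟩
  rw [← rectangle_inv]
  rfl

lemma degreeEquiv (h : IsSwitch A B) : DegreeEquiv A B := by
  obtain ⟨i, j, k, l, hA, rfl⟩ := h
  exact hA.degreeEquiv

end IsSwitch

namespace SwitchReachable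

lemma compl (h : SwitchReachable A B) : SwitchReachable Aᶜ Bᶜ :=
  Relation.ReflTransGen.lift (·ᶜ) (fun _ _ => IsSwitch.compl) _ _ h

lemma inv (h : SwitchReachable A B) : SwitchReachable A.inv B.inv :=
  Relation.ReflTransGen.lift SetRel.inv (fun _ _ => IsSwitch.inv) _ _ h

lemma degreeEquiv (h : SwitchReachable A B) : DegreeEquiv A B := by
  induction h with
  | refl => exact .refl A
  | tail _ hstep ih => exact ih.trans hstep.degreeEquiv

end SwitchReachable

end Switch

section Reversal

variable {V : Type*} {A : SetRel V V} {U : Set V} {a b c x y : V}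

/-- Switches can toggle all arcs between distinct vertices of `U`, and nothing else. If `A` induces
a directed 3-cycle on `U`, this reverses the cycle. -/
def IsReversible (A : SetRel V V) (U : Set V) : Prop :=
  SwitchReachable A (A ∆ U.offDiag)

lemma IsReversible.of_compl (h : IsReversible Aᶜ U) : IsReversible A U := by
  simpa only [IsReversible, compl_symmDiff_eq_compl_symmDiff, compl_compl] using
    SwitchReachable.compl h

lemma IsReversible.of_inv (h : IsReversible A.inv U) : IsReversible A U := by
  have hinv : (A.inv ∆ U.offDiag).inv = A ∆ U.offDiag := by
    rw [SetRel.inv, Set.preimage_symmDiff, ← SetRel.inv, ← SetRel.inv, offDiag_inv, SetRel.inv_inv]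
  rw [IsReversible, ← hinv]
  exact SwitchReachable.inv h

namespace IsCyclicTriple

lemma isReversible_of_one_arc (h : IsCyclicTriple A a b c) (hx : x ∉ ({a, b, c} : Set V))
    (hxa : (x, a) ∈ A) (hxb : (x, b) ∉ A) (hxc : (x, c) ∉ A) : IsReversible A {a, b, c} := by
  have hoffDiag : ({a, b, c} : Set V).offDiag =
      rectangle x b a c ∆ rectangle x a c b ∆ rectangle x c b a := by
    ext ⟨u, v⟩
    have := h.ne_ab
    have := h.ne_bc
    have := h.ne_ca
    simp only [Set.mem_offDiag, Set.mem_insert_iff, Set.mem_singleton_iff] at hx ⊢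
    grind
  have h₁ : CanSwitch A x a b c := by
    cases h
    constructor <;> grind
  have h₂ : CanSwitch (A ∆ rectangle x b a c) x c a b := by
    cases h
    constructor <;> grind
  have h₃ : CanSwitch (A ∆ rectangle x b a c ∆ rectangle x a c b) x b c a := by
    cases h
    constructor <;> grind
  rw [IsReversible, hoffDiag, ← symmDiff_assoc, ← symmDiff_assoc]
  exact (h₁.switchReachable.trans h₂.switchReachable).trans h₃.switchReachable

lemma isReversible_of_outer_arc (h : IsCyclicTriple A a b c) (hx : x ∉ ({a, b, c} : Set V))
    (hy : y ∉ ({a, b, c} : Set V)) (hne : x ≠ y) (hxy : (x, y) ∈ A)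
    (hxU : ∀ u ∈ ({a, b, c} : Set V), (x, u) ∉ A) (hay : (a, y) ∉ A) :
    IsReversible A {a, b, c} := by
  have hoffDiag : ({a, b, c} : Set V).offDiag =
      rectangle x a y b ∆ rectangle x c b a ∆ rectangle x b a c ∆ rectangle x a c y := by
    ext ⟨u, v⟩
    have := h.ne_ab
    have := h.ne_bc
    have := h.ne_ca
    simp only [Set.mem_offDiag, Set.mem_insert_iff, Set.mem_singleton_iff] at hx hy ⊢
    grind
  have h₁ : CanSwitch A x y a b := by
    cases h
    constructor <;> grind
  have h₂ : CanSwitch (A ∆ rectangle x a y b) x b c a := by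
    cases h
    constructor <;> grind
  have h₃ : CanSwitch (A ∆ rectangle x a y b ∆ rectangle x c b a) x a b c := by
    cases h
    constructor <;> grind
  have h₄ : CanSwitch (A ∆ rectangle x a y b ∆ rectangle x c b a ∆ rectangle x b a c) x c a y := by
    cases h
    constructor <;> grind
  rw [IsReversible, hoffDiag, ← symmDiff_assoc, ← symmDiff_assoc, ← symmDiff_assoc]
  exact ((h₁.switchReachable.trans h₂.switchReachable).trans h₃.switchReachable).trans
    h₄.switchReachable

lemma isReversible_of_mixed_row (h : IsCyclicTriple A a b c) (hx : x ∉ ({a, b, c} : Set V))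
    {u v : V} (hu : u ∈ ({a, b, c} : Set V)) (hv : v ∈ ({a, b, c} : Set V)) (hxu : (x, u) ∈ A)
    (hxv : (x, v) ∉ A) : IsReversible A {a, b, c} := by
  obtain ⟨u₁, u₂, hcycu, hU⟩ := h.exists_eq_of_mem hu
  by_cases hone : (x, u₁) ∉ A ∧ (x, u₂) ∉ A
  · rw [← hU] at hx ⊢
    exact hcycu.isReversible_of_one_arc hx hxu hone.1 hone.2
  · obtain ⟨v₁, v₂, hcycv, hV⟩ := h.exists_eq_of_mem hv
    have hxw {w : V} (hw : w ∈ ({a, b, c} : Set V)) (hwv : w ≠ v) : (x, w) ∈ A := by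
      rw [← hU] at hw hv
      grind
    have hxv₁ := hxw (hV ▸ .inr (.inl rfl)) hcycv.ne_ab.symm
    have hxv₂ := hxw (hV ▸ .inr (.inr rfl)) hcycv.ne_ca
    rw [← hV, Set.pair_comm] at hx ⊢
    exact (hcycv.compl.isReversible_of_one_arc hx hxv (not_not.2 hxv₂)
      (not_not.2 hxv₁)).of_compl

lemma out_mem_of_not_isReversible (h : IsCyclicTriple A a b c)
    (hA : ¬ IsReversible A {a, b, c}) (hx : x ∉ ({a, b, c} : Set V)) {u v : V}
    (hu : u ∈ ({a, b, c} : Set V)) (hv : v ∈ ({a, b, c} : Set V)) (hxu : (x, u) ∈ A) :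
    (x, v) ∈ A := by
  by_contra hxv
  exact hA (h.isReversible_of_mixed_row hx hu hv hxu hxv)

lemma notMem_of_not_isReversible (h : IsCyclicTriple A a b c)
    (hA : ¬ IsReversible A {a, b, c}) (hx : x ∉ ({a, b, c} : Set V))
    (hy : y ∉ ({a, b, c} : Set V)) (hne : x ≠ y) {u : V} (hu : u ∈ ({a, b, c} : Set V))
    (hxu : (x, u) ∉ A) (huy : (u, y) ∉ A) : (x, y) ∉ A := by
  intro hxy
  have hxU : ∀ v ∈ ({a, b, c} : Set V), (x, v) ∉ A :=
    fun v hv hxv => hxu (h.out_mem_of_not_isReversible hA hx hv hu hxv)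
  obtain ⟨v, w, hcyc, hU⟩ := h.exists_eq_of_mem hu
  rw [← hU] at hA hx hy hxU
  exact hA (hcyc.isReversible_of_outer_arc hx hy hne hxy hxU huy)

theorem isAnchor_of_not_isReversible (h : IsCyclicTriple A a b c)
    (hA : ¬ IsReversible A {a, b, c}) : IsAnchor A {a, b, c} := by
  have hAcompl : ¬ IsReversible Aᶜ {a, c, b} := fun hrev =>
    hA (Set.pair_comm b c ▸ hrev.of_compl)
  have hAinv : ¬ IsReversible A.inv {a, c, b} := fun hrev =>
    hA (Set.pair_comm b c ▸ hrev.of_inv)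
  refine ⟨?_, ?_, ?_, ?_⟩
  · exact fun x hx u hu v hv => h.out_mem_of_not_isReversible hA hx hu hv
  · rw [Set.pair_comm]
    exact fun x hx u hu v hv => h.inv.out_mem_of_not_isReversible hAinv hx hu hv
  · exact fun x hx y hy hne u hu => h.notMem_of_not_isReversible hA hx hy hne hu
  · rw [Set.pair_comm]
    intro x hx y hy hne u hu hxu huy
    exact not_not.1 (h.compl.notMem_of_not_isReversible hAcompl hx hy hne hu (not_not.2 hxu)
      (not_not.2 huy))

end IsCyclicTriple

end Reversal

section Descent

variable {V : Type*} [Finite V] {A B D : SetRel V V} {a b c i j k l : V}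

lemma ncard_symmDiff_rectangle_lt (hik : i ≠ k) (hjl : j ≠ l) {p : V × V}
    (h : rectangle i k j l ⊆ insert p D) : (D ∆ rectangle i k j l).ncard < D.ncard := by
  have hcard : (rectangle i k j l).ncard = 4 := by
    rw [rectangle, Set.ncard_prod, Set.ncard_pair hik, Set.ncard_pair hjl]
  have hsdiff : (rectangle i k j l \ D).ncard ≤ 1 := by
    rw [← Set.ncard_singleton p]
    exact Set.ncard_le_ncard (Set.sdiff_subset_iff.2 (Set.union_singleton ▸ h))
  have := Set.ncard_inter_add_ncard_sdiff_eq_ncard (rectangle i k j l) D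
  rw [Set.inter_comm] at this
  exact ncard_symmDiff_lt (by lia)

/-- No switch of `A` brings it closer to `B`. -/
def IsSwitchClosest (A B : SetRel V V) : Prop :=
  ∀ A', IsSwitch A A' → (A ∆ B).ncard ≤ (A' ∆ B).ncard

lemma IsSwitchClosest.not_subset_insert (h : IsSwitchClosest A B) (hA : CanSwitch A i j k l)
    (p : V × V) : ¬ rectangle i k j l ⊆ insert p (A ∆ B) := by
  intro hsub
  have hle := h _ ⟨i, j, k, l, hA, rfl⟩
  have hik : i ≠ k := by have := hA.nodup; grind
  have hjl : j ≠ l := by have := hA.nodup; grind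
  rw [symmDiff_right_comm] at hle
  exact hle.not_gt (ncard_symmDiff_rectangle_lt hik hjl hsub)

lemma IsSwitchClosest.fillsCorners (hA : IsSwitchClosest A B) (hB : IsSwitchClosest B A)
    (hAB : DegreeEquiv A B) : FillsCorners (A \ B) (B \ A) := by
  intro r s c d hrc hsc hsd hrd
  have := hAB.loop_mem_iff r
  have := hAB.loop_mem_iff s
  by_contra hmem
  by_cases hA' : (r, d) ∈ A
  · have hswitch : CanSwitch B r d s c := by constructor <;> grind
    refine hB.not_subset_insert hswitch (r, d) ?_
    rintro ⟨x, y⟩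
    grind
  · have hswitch : CanSwitch A r c s d := by constructor <;> grind
    refine hA.not_subset_insert hswitch (r, d) ?_
    rintro ⟨x, y⟩
    grind

lemma IsSwitchClosest.isAlternatingPair (hA : IsSwitchClosest A B) (hB : IsSwitchClosest B A)
    (hAB : DegreeEquiv A B) : IsAlternatingPair (A \ B) (B \ A) where
  irrefl x hx := hx.2 ((hAB.loop_mem_iff x).1 hx.1)
  disjoint _ _ hA hB := hB.2 hA.1
  exists_row _ _ h := hAB.symm.exists_row h.1 h.2
  exists_col _ _ h := hAB.exists_col h.1 h.2
  fillsCorners_left := hA.fillsCorners hB hAB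
  fillsCorners_right := hB.fillsCorners hA hAB.symm

lemma IsSwitchClosest.exists_isCyclicTriple (hA : IsSwitchClosest A B) (hB : IsSwitchClosest B A)
    (hAB : DegreeEquiv A B) (hne : A ≠ B) :
    ∃ a b c, IsCyclicTriple A a b c ∧ ({a, b, c} : Set V).offDiag ⊆ A ∆ B := by
  have hdiff : ∃ x y, (x, y) ∈ A \ B := by
    by_contra! hsub
    refine hne (Set.Subset.antisymm (fun p hp => ?_) fun p hp => ?_)
    · by_contra hpB
      exact hsub p.1 p.2 ⟨hp, hpB⟩
    · by_contra hpA
      obtain ⟨z, hz⟩ := hAB.symm.exists_row hp hpA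
      exact hsub p.1 z hz
  obtain ⟨a, b, c, hab, hbc, hca, hba, hcb, hac⟩ :=
    (hA.isAlternatingPair hB hAB).exists_triangle hdiff
  refine ⟨a, b, c, by constructor <;> grind, ?_⟩
  rintro ⟨x, y⟩ hxy
  simp only [Set.mem_offDiag, Set.mem_insert_iff, Set.mem_singleton_iff] at hxy
  grind

theorem switchReachable_of_not_isAnchored {A B : SetRel V V} (hAB : DegreeEquiv A B)
    (hA : ¬ IsAnchored A) : SwitchReachable A B := by
  induction hcard : (A ∆ B).ncard using Nat.strong_induction_on generalizing A B with
  | h m ih =>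
    subst hcard
    have hstep {A' B'} (hA' : DegreeEquiv A A') (hB' : DegreeEquiv B B')
        (hlt : (A' ∆ B').ncard < (A ∆ B).ncard) : SwitchReachable A' B' :=
      ih _ hlt ((hA'.symm.trans hAB).trans hB') (fun h => hA (h.of_degreeEquiv hA'.symm)) rfl
    rcases eq_or_ne A B with rfl | hne
    · exact .refl
    by_cases hclosestA : IsSwitchClosest A B
    · by_cases hclosestB : IsSwitchClosest B A
      · obtain ⟨a, b, c, hcyc, hsub⟩ := hclosestA.exists_isCyclicTriple hclosestB hAB hne
        have hrev : IsReversible A {a, b, c} := by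
          by_contra hrev
          exact hA ⟨a, b, c, hcyc, hcyc.isAnchor_of_not_isReversible hrev⟩
        refine hrev.trans (hstep hcyc.degreeEquiv_symmDiff_offDiag (.refl B) ?_)
        rw [symmDiff_right_comm]
        refine ncard_symmDiff_lt ?_
        rw [Set.sdiff_eq_empty.2 hsub, Set.ncard_empty, Set.ncard_pos]
        exact ⟨(a, b), hsub ⟨.inl rfl, .inr (.inl rfl), hcyc.ne_ab⟩, .inl rfl, .inr (.inl rfl),
          hcyc.ne_ab⟩
      · simp only [IsSwitchClosest, not_forall, not_le] at hclosestB
        obtain ⟨B', hB', hlt⟩ := hclosestB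
        rw [symmDiff_comm, symmDiff_comm B] at hlt
        exact (hstep (.refl A) hB'.degreeEquiv hlt).tail hB'.symm
    · simp only [IsSwitchClosest, not_forall, not_le] at hclosestA
      obtain ⟨A', hA', hlt⟩ := hclosestA
      exact (hstep hA'.degreeEquiv (.refl B) hlt).head hA'

end Descent

section Obstruction

variable {V : Type*} [Finite V] {A B : SetRel V V} {U : Set V} {x y : V}

lemma IsAnchor.mem_iff_mem_of_isSwitch (h : IsAnchor A U) (hU : U.ncard ≤ 3) (hAB : IsSwitch A B)
    (hx : x ∈ U) (hy : y ∈ U) : (x, y) ∈ A ↔ (x, y) ∈ B := by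
  have hout {x u} (hx : x ∉ U) (hu : u ∈ U) := h.out_mem_iff hAB.degreeEquiv hx hu
  have hin {x u} (hx : x ∉ U) (hu : u ∈ U) := h.in_mem_iff hAB.degreeEquiv hx hu
  obtain ⟨i, j, k, l, hA, rfl⟩ := hAB
  have hij : i ∈ U ↔ j ∈ U := by
    have := hout (x := i) (u := j)
    have := hin (x := j) (u := i)
    cases hA
    grind
  have hkj : k ∈ U ↔ j ∈ U := by
    have := hout (x := k) (u := j)
    have := hin (x := j) (u := k)
    cases hA
    grind
  have hi : i ∉ U := by
    intro hi
    have hsub : (([i, j, k, l].toFinset : Finset V) : Set V) ⊆ U := by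
      intro z hz
      simp only [List.coe_toFinset, List.mem_cons, List.not_mem_nil, or_false] at hz
      grind
    have hcard := Set.ncard_le_ncard hsub
    rw [Set.ncard_coe_finset, List.toFinset_card_of_nodup hA.nodup] at hcard
    exact absurd (hcard.trans hU) (by simp)
  grind

lemma IsAnchor.mem_iff_mem_of_switchReachable (h : IsAnchor A U) (hU : U.ncard ≤ 3)
    (hAB : SwitchReachable A B) (hx : x ∈ U) (hy : y ∈ U) : (x, y) ∈ A ↔ (x, y) ∈ B := by
  induction hAB with
  | refl => rfl
  | tail hreach hstep ih =>
    have hanchor := h.of_degreeEquiv (SwitchReachable.degreeEquiv hreach)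
    exact ih.trans (hanchor.mem_iff_mem_of_isSwitch hU hstep hx hy)

theorem isAnchored_iff_exists_not_switchReachable :
    IsAnchored A ↔ ∃ B, DegreeEquiv A B ∧ ¬ SwitchReachable A B := by
  refine ⟨fun ⟨a, b, c, hcyc, hanchor⟩ => ?_, fun ⟨B, hAB, hreach⟩ => ?_⟩
  · refine ⟨_, hcyc.degreeEquiv_symmDiff_offDiag, fun hreach => ?_⟩
    have hcard : ({a, b, c} : Set V).ncard = 3 :=
      Set.ncard_eq_three.2 ⟨a, b, c, hcyc.ne_ab, hcyc.ne_ca.symm, hcyc.ne_bc, rfl⟩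
    have hiff : (a, b) ∈ A ↔ _ :=
      hanchor.mem_iff_mem_of_switchReachable hcard.le hreach (.inl rfl) (.inr (.inl rfl))
    have := hcyc.ne_ab
    have := hcyc.ab_mem
    grind
  · by_contra hA
    exact hreach (switchReachable_of_not_isAnchored hAB hA)

end Obstruction

section Omega

variable {dm dp : Fin n → ℕ} {A B : Set (Fin n × Fin n)} {U : Set (Fin n)} {a b c : Fin n}

lemma dswitch_iff_isSwitch : DSwitch A B ↔ IsSwitch A B := by
  have hrect {i j k l : Fin n} (h : CanSwitch A i j k l) :
      (A \ {(i, j), (k, l)}) ∪ {(i, l), (k, j)} = A ∆ rectangle i k j l := by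
    cases h
    ext ⟨x, y⟩
    simp only [Set.mem_union, Set.mem_sdiff, Set.mem_insert_iff, Set.mem_singleton_iff,
      Prod.mk.injEq, Set.mem_symmDiff, mem_rectangle]
    grind
  constructor
  · rintro ⟨i, j, k, l, hij, hik, hil, hjk, hjl, hkl, hA₁, hA₂, hA₃, hA₄, rfl⟩
    have h : CanSwitch A i j k l := by constructor <;> grind
    exact ⟨i, j, k, l, h, hrect h⟩
  · rintro ⟨i, j, k, l, h, rfl⟩
    have hnodup := h.nodup
    simp only [List.nodup_cons, List.mem_cons, List.not_mem_nil, not_or] at hnodup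
    exact ⟨i, j, k, l, by tauto, by tauto, by tauto, by tauto, by tauto, by tauto,
      h.ij_mem, h.kl_mem, h.il_notMem, h.kj_notMem, (hrect h).symm⟩

lemma mem_Omega_iff_degreeEquiv (hA : A ∈ Omega dm dp) : B ∈ Omega dm dp ↔ DegreeEquiv A B := by
  obtain ⟨hloop, hrow, hcol⟩ := hA
  have hloop (x : Fin n) : (x, x) ∉ A := fun hx => hloop _ hx rfl
  constructor
  · rintro ⟨hloopB, hrowB, hcolB⟩
    exact ⟨⟨fun x => (hrow x).trans (hrowB x).symm, fun y => (hcol y).trans (hcolB y).symm⟩,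
      fun x => iff_of_false (hloop x) fun hx => hloopB _ hx rfl⟩
  · intro h
    refine ⟨?_, fun x => (h.ncard_row x).symm.trans (hrow x),
      fun y => (h.ncard_col y).symm.trans (hcol y)⟩
    rintro ⟨x, y⟩ hxy (rfl : x = y)
    exact hloop x ((h.loop_mem_iff x).2 hxy)

theorem not_switchIrreducible_iff_exists_isAnchored :
    ¬ SwitchIrreducible dm dp ↔ ∃ A ∈ Omega dm dp, IsAnchored A := by
  have hswitch : (DSwitch : SetRel (Fin n) (Fin n) → _ → Prop) = IsSwitch := by
    ext A B
    exact dswitch_iff_isSwitch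
  simp only [SwitchIrreducible, hswitch, not_forall]
  refine exists_congr fun A => ?_
  rw [exists_prop, and_congr_right_iff]
  intro hA
  simp only [exists_prop, mem_Omega_iff_degreeEquiv hA, isAnchored_iff_exists_not_switchReachable,
    SwitchReachable]

lemma isTriangle_iff_isCyclicTriple (hA : ∀ x, (x, x) ∉ A) :
    IsTriangle A a b c ↔ IsCyclicTriple A a b c := by
  constructor
  · rintro ⟨hab, hac, hbc, h⟩
    have hiff (x y : Fin n) := Set.ext_iff.1 h (x, y)
    simp only [Set.mem_ofPred_eq, Set.mem_insert_iff, Set.mem_singleton_iff, Prod.mk.injEq]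
      at hiff
    constructor <;> grind
  · intro h
    refine ⟨h.ne_ab, h.ne_ca.symm, h.ne_bc, ?_⟩
    ext ⟨x, y⟩
    have := hA x
    simp only [Set.mem_ofPred_eq, Set.mem_insert_iff, Set.mem_singleton_iff, Prod.mk.injEq]
    cases h
    grind

/-- The conditions of LaMar's theorem on the vertices outside `U`: the four classes partition them,
(U1) and (U2). -/
def IsPartitioned (A : Set (Fin n × Fin n)) (U : Set (Fin n)) : Prop :=
  (∀ x, x ∉ U → x ∈ U0 A U ∪ Uminus A U ∪ Uplus A U ∪ Upm A U) ∧
  [U0 A U, Uminus A U, Uplus A U, Upm A U].Pairwise Disjoint ∧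
  (∀ x ∈ U0 A U ∪ Uplus A U, ∀ y ∈ U0 A U ∪ Uminus A U, (x, y) ∉ A) ∧
  (∀ x ∈ Uminus A U ∪ Upm A U, ∀ y ∈ Uplus A U ∪ Upm A U, x ≠ y → (x, y) ∈ A)

lemma pairwise_disjoint_classes (hU : U.Nonempty) :
    [U0 A U, Uminus A U, Uplus A U, Upm A U].Pairwise Disjoint := by
  obtain ⟨u, hu⟩ := hU
  simp only [List.pairwise_cons, List.mem_cons, List.not_mem_nil, Set.disjoint_left]
  simp only [U0, Uminus, Uplus, Upm, Set.mem_ofPred_eq]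
  grind

lemma IsAnchor.isPartitioned (hA : ∀ x, (x, x) ∉ A) (hU : U.Nonempty) (h : IsAnchor A U) :
    IsPartitioned A U := by
  refine ⟨fun x hx => ?_, pairwise_disjoint_classes hU, ?_, ?_⟩
  all_goals
    obtain ⟨u, hu⟩ := hU
    simp only [U0, Uminus, Uplus, Upm, Set.mem_union, Set.mem_ofPred_eq]
  · have hout := fun v hv => h.out_mem x hx u hu v hv
    have hout' := fun v hv => h.out_mem x hx v hv u hu
    have hin := fun v hv => h.in_mem x hx u hu v hv
    have hin' := fun v hv => h.in_mem x hx v hv u hu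
    grind
  · intro x hx y hy
    rcases eq_or_ne x y with rfl | hne
    · exact hA x
    · have := h.notMem x (by tauto) y (by tauto) hne u hu
      grind
  · intro x hx y hy hne
    have := h.mem x (by tauto) y (by tauto) hne u hu
    grind

lemma IsPartitioned.isAnchor (h : IsPartitioned A U) : IsAnchor A U := by
  obtain ⟨hcover, -, hU1, hU2⟩ := h
  simp only [U0, Uminus, Uplus, Upm, Set.mem_union, Set.mem_ofPred_eq] at hcover hU1 hU2
  refine ⟨?_, ?_, ?_, ?_⟩
  · intro x hx u hu v hv
    have := hcover x hx
    grind
  · intro x hx u hu v hv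
    have := hcover x hx
    grind
  · intro x hx y hy _ u hu hxu huy
    have := hcover x hx
    have := hcover y hy
    exact hU1 x (by grind) y (by grind)
  · intro x hx y hy hne u hu hxu huy
    have := hcover x hx
    have := hcover y hy
    exact hU2 x (by grind) y (by grind) hne

theorem isAnchored_iff_exists_isTriangle (hA : ∀ x, (x, x) ∉ A) :
    IsAnchored A ↔ ∃ v0 v1 v2, IsTriangle A v0 v1 v2 ∧ IsPartitioned A {v0, v1, v2} := by
  refine exists_congr fun a => exists_congr fun b => exists_congr fun c => ?_
  rw [isTriangle_iff_isCyclicTriple hA]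
  exact and_congr_right fun _ =>
    ⟨IsAnchor.isPartitioned hA (Set.insert_nonempty _ _), IsPartitioned.isAnchor⟩

end Omega

/-- LaMar's characterisation: the directed switch chain fails to be irreducible iff
every digraph in `Omega dm dp` contains a directed 3-cycle `U = {v0,v1,v2}` such that
`U⁰, U⁻, U⁺, U^±` partition the remaining vertices, no arc goes from `U⁰ ∪ U⁺` to
`U⁰ ∪ U⁻`, and every possible arc from `U⁻ ∪ U^±` to `U⁺ ∪ U^±` is present. -/
theorem lamar_characterisation
    (dm dp : Fin n → ℕ)
    (hdigraphical : (Omega dm dp).Nonempty) :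
    ¬ SwitchIrreducible dm dp ↔
      ∀ A ∈ Omega dm dp, ∃ v0 v1 v2 : Fin n,
        IsTriangle A v0 v1 v2 ∧
        (∀ x, x ∉ ({v0, v1, v2} : Set (Fin n)) →
          x ∈ U0 A {v0, v1, v2} ∪ Uminus A {v0, v1, v2} ∪
              Uplus A {v0, v1, v2} ∪ Upm A {v0, v1, v2}) ∧
        ([U0 A {v0, v1, v2}, Uminus A {v0, v1, v2},
          Uplus A {v0, v1, v2}, Upm A {v0, v1, v2}].Pairwise Disjoint) ∧
        (∀ x ∈ U0 A {v0, v1, v2} ∪ Uplus A {v0, v1, v2},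
          ∀ y ∈ U0 A {v0, v1, v2} ∪ Uminus A {v0, v1, v2}, (x, y) ∉ A) ∧
        (∀ x ∈ Uminus A {v0, v1, v2} ∪ Upm A {v0, v1, v2},
          ∀ y ∈ Uplus A {v0, v1, v2} ∪ Upm A {v0, v1, v2}, x ≠ y → (x, y) ∈ A) := by
  have hpart (A) (hA : A ∈ Omega dm dp) := isAnchored_iff_exists_isTriangle (A := A)
    fun x hx => hA.1 _ hx rfl
  rw [not_switchIrreducible_iff_exists_isAnchored]
  constructor
  · rintro ⟨A, hA, hanchored⟩ B hB
    exact (hpart B hB).1 (hanchored.of_degreeEquiv ((mem_Omega_iff_degreeEquiv hA).1 hB))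
  · intro h
    obtain ⟨A, hA⟩ := hdigraphical
    exact ⟨A, hA, (hpart A hA).2 (h A hA)⟩

end DirectedSwitchChain
end
end

section
/- Let L be a directed encoding for the directed degree sequence ᵈ with exactly p 2-defect arcs and exactly q (−1)-defect arcs, and let a_1, b_1 ∈ [n] be distinct vertices with L(a_1, b_1) ≠ 0. Then the number of ordered pairs of vertices (a_2, b_2) such that L(a_2, b_2) = 1, L(a_2, b_1) = 0 and a_1, b_1, a_2, b_2 are all distinct is at least m − 2p + q − ( r_max·( r_max − ζ_{b_1}^- + 2·η_{b_1}^- + 2 ) + η_{a_1}^- + η_{b_1}^+ − 2·(ζ_{a_1}^- + ζ_{b_1}^+) + Σ_{y ∈ N̂_L^-(b_1)} (η_y^+ − 2·ζ_y^+) ). -/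
/-!
Each entry `x` of `L` lies in `{-1, 0, 1, 2}`, so `[x = 1] = x - 2 [x = 2] + [x = -1]` and
`[x ≠ 0] = x - [x = 2] + 2 [x = -1]`. Summing over a row, a column or the whole matrix expresses
the number of arcs labelled `1`, or of arcs with nonzero label, through degrees and defects.

An arc labelled `1` fails to be a valid choice of `(a₂, b₂)` only if its tail lies in `N̂⁻(b₁)`
(which covers tail `a₁` and head `b₁`), its tail is `b₁`, or its head is `a₁`. A union bound over
these three events, with every semi-degree at most `r_max`, gives the claim.
-/

open scoped Classical

noncomputable section

namespace DirectedSwitchChain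

variable {n : ℕ}

/-- A directed encoding for the directed degree sequence `(dm, dp)`: an integer
matrix with zero diagonal, entries in `{-1, 0, 1, 2}`, row sums `dp` and column
sums `dm`. -/
def IsDirEncoding (dm dp : Fin n → ℕ) (L : Matrix (Fin n) (Fin n) ℤ) : Prop :=
  (∀ i, L i i = 0) ∧
  (∀ i j, L i j = -1 ∨ L i j = 0 ∨ L i j = 1 ∨ L i j = 2) ∧
  (∀ j, ∑ k, L j k = (dp j : ℤ)) ∧
  (∀ j, ∑ k, L k j = (dm j : ℤ))

/-- `N⁺_L(v)`: out-neighbours of `v` along arcs labelled `1`. -/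
def nbrOut (L : Matrix (Fin n) (Fin n) ℤ) (v : Fin n) : Set (Fin n) :=
  {w | w ≠ v ∧ L v w = 1}

/-- `N⁻_L(v)`: in-neighbours of `v` along arcs labelled `1`. -/
def nbrIn (L : Matrix (Fin n) (Fin n) ℤ) (v : Fin n) : Set (Fin n) :=
  {w | w ≠ v ∧ L w v = 1}

/-- `N̂⁺_L(v)`: all out-neighbours of `v` (along arcs with nonzero label). -/
def nbrOutHat (L : Matrix (Fin n) (Fin n) ℤ) (v : Fin n) : Set (Fin n) :=
  {w | w ≠ v ∧ L v w ≠ 0}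

/-- `N̂⁻_L(v)`: all in-neighbours of `v` (along arcs with nonzero label). -/
def nbrInHat (L : Matrix (Fin n) (Fin n) ℤ) (v : Fin n) : Set (Fin n) :=
  {w | w ≠ v ∧ L w v ≠ 0}

/-- `ζ⁺_v`: the number of 2-defect arcs with tail `v`. -/
def zetaOut (L : Matrix (Fin n) (Fin n) ℤ) (v : Fin n) : ℕ :=
  {w | w ≠ v ∧ L v w = 2}.ncard

/-- `ζ⁻_v`: the number of 2-defect arcs with head `v`. -/
def zetaIn (L : Matrix (Fin n) (Fin n) ℤ) (v : Fin n) : ℕ :=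
  {w | w ≠ v ∧ L w v = 2}.ncard

/-- `η⁺_v`: the number of (−1)-defect arcs with tail `v`. -/
def etaOut (L : Matrix (Fin n) (Fin n) ℤ) (v : Fin n) : ℕ :=
  {w | w ≠ v ∧ L v w = -1}.ncard

/-- `η⁻_v`: the number of (−1)-defect arcs with head `v`. -/
def etaIn (L : Matrix (Fin n) (Fin n) ℤ) (v : Fin n) : ℕ :=
  {w | w ≠ v ∧ L w v = -1}.ncard


/-- The set of (ordered) arcs of `L` carrying the label `c`. -/
def labelArcs (L : Matrix (Fin n) (Fin n) ℤ) (c : ℤ) : Set (Fin n × Fin n) :=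
  {ab | ab.1 ≠ ab.2 ∧ L ab.1 ab.2 = c}

/-- The maximum semi-degree. -/
def rmax (dm dp : Fin n → ℕ) : ℕ := Finset.univ.sup fun j => max (dm j) (dp j)

/-- The valid choices of `(a₂, b₂)` given `(a₁, b₁)`: arcs labelled `1` that are disjoint from
`(a₁, b₁)` and whose tail does not send an arc of nonzero label to `b₁`. -/
def secondArcs (L : Matrix (Fin n) (Fin n) ℤ) (a1 b1 : Fin n) : Set (Fin n × Fin n) :=
  {ab | L ab.1 ab.2 = 1 ∧ L ab.1 b1 = 0 ∧
    ab.1 ≠ a1 ∧ ab.1 ≠ b1 ∧ ab.2 ≠ a1 ∧ ab.2 ≠ b1 ∧ ab.1 ≠ ab.2}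

lemma ite_eq_one_of_mem_Icc {x : ℤ} (hx : x ∈ Set.Icc (-1) 2) :
    (if x = 1 then 1 else 0 : ℤ) =
      x - 2 * (if x = 2 then 1 else 0) + (if x = -1 then 1 else 0) := by
  grind

lemma ite_ne_zero_of_mem_Icc {x : ℤ} (hx : x ∈ Set.Icc (-1) 2) :
    (if x ≠ 0 then 1 else 0 : ℤ) =
      x - (if x = 2 then 1 else 0) + 2 * (if x = -1 then 1 else 0) := by
  grind

section EntryCounts

variable {ι : Type*} [Fintype ι] {f : ι → ℤ} {S : Set ι}

lemma natCast_ncard_mem_and (p : ι → Prop) [DecidablePred p] (hp : ∀ i, p i → i ∈ S) :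
    ({i | i ∈ S ∧ p i}.ncard : ℤ) = ∑ i, if p i then 1 else 0 := by
  simp only [and_iff_right_of_imp (hp _), Set.ncard_eq_toFinset_card', Set.toFinset_ofPred,
    Finset.natCast_card_filter]

lemma natCast_ncard_mem_and_eq {c : ℤ} (hc : c ≠ 0) (hS : f.support ⊆ S) :
    ({i | i ∈ S ∧ f i = c}.ncard : ℤ) = ∑ i, if f i = c then 1 else 0 :=
  natCast_ncard_mem_and (f · = c) fun _ hi => hS (ne_of_eq_of_ne hi hc)

lemma natCast_ncard_mem_and_eq_one (hf : ∀ i, f i ∈ Set.Icc (-1) 2) (hS : f.support ⊆ S) :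
    ({i | i ∈ S ∧ f i = 1}.ncard : ℤ) =
      ∑ i, f i - 2 * {i | i ∈ S ∧ f i = 2}.ncard + {i | i ∈ S ∧ f i = -1}.ncard := by
  rw [natCast_ncard_mem_and_eq one_ne_zero hS, natCast_ncard_mem_and_eq two_ne_zero hS,
    natCast_ncard_mem_and_eq (by decide) hS, Finset.mul_sum, ← Finset.sum_sub_distrib,
    ← Finset.sum_add_distrib]
  exact Finset.sum_congr rfl fun i _ => ite_eq_one_of_mem_Icc (hf i)

lemma natCast_ncard_mem_and_ne_zero (hf : ∀ i, f i ∈ Set.Icc (-1) 2) (hS : f.support ⊆ S) :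
    ({i | i ∈ S ∧ f i ≠ 0}.ncard : ℤ) =
      ∑ i, f i - {i | i ∈ S ∧ f i = 2}.ncard + 2 * {i | i ∈ S ∧ f i = -1}.ncard := by
  rw [natCast_ncard_mem_and (f · ≠ 0) hS, natCast_ncard_mem_and_eq two_ne_zero hS,
    natCast_ncard_mem_and_eq (by decide) hS, Finset.mul_sum, ← Finset.sum_sub_distrib,
    ← Finset.sum_add_distrib]
  exact Finset.sum_congr rfl fun i _ => ite_ne_zero_of_mem_Icc (hf i)

end EntryCounts

namespace IsDirEncoding

variable {dm dp : Fin n → ℕ} {L : Matrix (Fin n) (Fin n) ℤ}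

lemma transpose (hL : IsDirEncoding dm dp L) : IsDirEncoding dp dm L.transpose :=
  ⟨hL.1, fun i j => hL.2.1 j i, hL.2.2.2, hL.2.2.1⟩

lemma apply_mem_Icc (hL : IsDirEncoding dm dp L) (a b : Fin n) : L a b ∈ Set.Icc (-1) 2 := by
  have h := hL.2.1 a b
  grind

lemma ne_of_apply_ne_zero (hL : IsDirEncoding dm dp L) {a b : Fin n} (h : L a b ≠ 0) : a ≠ b := by
  rintro rfl
  exact h (hL.1 a)

lemma ncard_nbrOut (hL : IsDirEncoding dm dp L) (v : Fin n) :
    ((nbrOut L v).ncard : ℤ) = dp v - 2 * zetaOut L v + etaOut L v := by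
  rw [← hL.2.2.1 v]
  exact natCast_ncard_mem_and_eq_one (hL.apply_mem_Icc v)
    fun _ h => (hL.ne_of_apply_ne_zero h).symm

lemma sum_ncard_nbrOut (hL : IsDirEncoding dm dp L) (S : Finset (Fin n)) :
    ∑ y ∈ S, ((nbrOut L y).ncard : ℤ) =
      ∑ y ∈ S, (dp y : ℤ) + ∑ y ∈ S, ((etaOut L y : ℤ) - 2 * zetaOut L y) := by
  rw [← Finset.sum_add_distrib]
  exact Finset.sum_congr rfl fun y _ => by rw [hL.ncard_nbrOut]; ring

lemma ncard_nbrIn (hL : IsDirEncoding dm dp L) (v : Fin n) :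
    ((nbrIn L v).ncard : ℤ) = dm v - 2 * zetaIn L v + etaIn L v :=
  hL.transpose.ncard_nbrOut v

lemma ncard_nbrInHat (hL : IsDirEncoding dm dp L) (v : Fin n) :
    ((nbrInHat L v).ncard : ℤ) = dm v - zetaIn L v + 2 * etaIn L v := by
  rw [← hL.2.2.2 v]
  exact natCast_ncard_mem_and_ne_zero (hL.apply_mem_Icc · v)
    fun _ h => hL.ne_of_apply_ne_zero h

lemma ncard_labelArcs_one (hL : IsDirEncoding dm dp L) :
    ((labelArcs L 1).ncard : ℤ) =
      (∑ j, dm j : ℕ) - 2 * (labelArcs L 2).ncard + (labelArcs L (-1)).ncard := by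
  have hsum : ((∑ j, dm j : ℕ) : ℤ) = ∑ ab : Fin n × Fin n, L ab.1 ab.2 := by
    simp only [Nat.cast_sum, ← hL.2.2.2, Fintype.sum_prod_type_right]
  rw [hsum]
  exact natCast_ncard_mem_and_eq_one (fun ab => hL.apply_mem_Icc ab.1 ab.2)
    fun _ h => hL.ne_of_apply_ne_zero h

end IsDirEncoding

section UnionBound

variable {L : Matrix (Fin n) (Fin n) ℤ} {a1 b1 : Fin n}

lemma labelArcs_one_subset (h : L a1 b1 ≠ 0) :
    labelArcs L 1 ⊆ secondArcs L a1 b1 ∪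
      (⋃ y ∈ Finset.univ.filter (· ∈ nbrInHat L b1), Prod.mk y '' nbrOut L y) ∪
      Prod.mk b1 '' nbrOut L b1 ∪ (·, a1) '' nbrIn L a1 := by
  rintro ⟨a, b⟩ ⟨hab : a ≠ b, hone : L a b = 1⟩
  obtain rfl | htail := eq_or_ne a b1
  · exact Or.inl (Or.inr ⟨b, ⟨hab.symm, hone⟩, rfl⟩)
  obtain rfl | hhead := eq_or_ne b a1
  · exact Or.inr ⟨a, ⟨hab, hone⟩, rfl⟩
  by_cases hzero : L a b1 = 0
  · have hb : b ≠ b1 := by rintro rfl; omega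
    have ha : a ≠ a1 := by rintro rfl; exact h hzero
    exact Or.inl (Or.inl (Or.inl ⟨hone, hzero, ha, htail, hhead, hb, hab⟩))
  · refine Or.inl (Or.inl (Or.inr (Set.mem_biUnion (x := a) ?_ ⟨b, ⟨hab.symm, hone⟩, rfl⟩)))
    exact Finset.mem_filter.2 ⟨Finset.mem_univ a, htail, hzero⟩

lemma ncard_labelArcs_one_le (h : L a1 b1 ≠ 0) :
    (labelArcs L 1).ncard ≤ (secondArcs L a1 b1).ncard +
      ∑ y ∈ Finset.univ.filter (· ∈ nbrInHat L b1), (nbrOut L y).ncard +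
      (nbrOut L b1).ncard + (nbrIn L a1).ncard := by
  refine (Set.ncard_le_ncard (labelArcs_one_subset h)).trans ?_
  refine (Set.ncard_union_le _ _).trans (add_le_add ?_ Set.ncard_image_le)
  refine (Set.ncard_union_le _ _).trans (add_le_add ?_ Set.ncard_image_le)
  refine (Set.ncard_union_le _ _).trans (add_le_add_right ?_ _)
  exact (Finset.set_ncard_biUnion_le _ _).trans
    (Finset.sum_le_sum fun _ _ => Set.ncard_image_le)

end UnionBound

lemma dm_le_rmax (dm dp : Fin n → ℕ) (v : Fin n) : dm v ≤ rmax dm dp :=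
  (le_max_left _ _).trans
    (Finset.le_sup (f := fun j => max (dm j) (dp j)) (Finset.mem_univ v))

lemma dp_le_rmax (dm dp : Fin n → ℕ) (v : Fin n) : dp v ≤ rmax dm dp :=
  (le_max_right _ _).trans
    (Finset.le_sup (f := fun j => max (dm j) (dp j)) (Finset.mem_univ v))

lemma IsDirEncoding.sum_dp_nbrInHat_le {dm dp : Fin n → ℕ} {L : Matrix (Fin n) (Fin n) ℤ}
    (hL : IsDirEncoding dm dp L) (v : Fin n) :
    ∑ y ∈ Finset.univ.filter (· ∈ nbrInHat L v), (dp y : ℤ) ≤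
      rmax dm dp * (rmax dm dp - zetaIn L v + 2 * etaIn L v) :=
  calc ∑ y ∈ Finset.univ.filter (· ∈ nbrInHat L v), (dp y : ℤ)
      ≤ (Finset.univ.filter (· ∈ nbrInHat L v)).card • (rmax dm dp : ℤ) :=
        Finset.sum_le_card_nsmul _ _ _ fun y _ => by exact_mod_cast dp_le_rmax dm dp y
    _ = rmax dm dp * (nbrInHat L v).ncard := by
        rw [nsmul_eq_mul, mul_comm, Set.ncard_eq_toFinset_card', Set.filter_mem_univ_eq_toFinset]
    _ = rmax dm dp * (dm v - zetaIn L v + 2 * etaIn L v) := by rw [hL.ncard_nbrInHat]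
    _ ≤ rmax dm dp * (rmax dm dp - zetaIn L v + 2 * etaIn L v) := by
        gcongr
        exact dm_le_rmax dm dp v

/-- Lower bound on the number of ordered pairs `(a₂, b₂)` with `L(a₂,b₂) = 1`,
`L(a₂,b₁) = 0` and `a₁, b₁, a₂, b₂` all distinct. -/
theorem dir_choose_second_arc_lower_bound
    (dm dp : Fin n → ℕ) (hsum : ∑ j, dm j = ∑ j, dp j)
    (L : Matrix (Fin n) (Fin n) ℤ) (hL : IsDirEncoding dm dp L)
    (p q : ℕ)
    (hp : (labelArcs L 2).ncard = p)
    (hq : (labelArcs L (-1)).ncard = q)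
    (a1 b1 : Fin n) (hne : a1 ≠ b1) (hL1 : L a1 b1 ≠ 0) :
    ((∑ j, dm j : ℕ) : ℤ) - 2 * p + q -
        ((rmax dm dp : ℤ) *
            ((rmax dm dp : ℤ) - zetaIn L b1 + 2 * etaIn L b1 + 2)
          + etaIn L a1 + etaOut L b1
          - 2 * ((zetaIn L a1 : ℤ) + zetaOut L b1)
          + ∑ y ∈ Finset.univ.filter (· ∈ nbrInHat L b1),
              ((etaOut L y : ℤ) - 2 * zetaOut L y)) ≤
      ({ab : Fin n × Fin n |
          L ab.1 ab.2 = 1 ∧ L ab.1 b1 = 0 ∧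
          ab.1 ≠ a1 ∧ ab.1 ≠ b1 ∧ ab.2 ≠ a1 ∧ ab.2 ≠ b1 ∧ ab.1 ≠ ab.2}.ncard : ℤ) := by
  subst hp hq
  have hunion : ((labelArcs L 1).ncard : ℤ) ≤ (secondArcs L a1 b1).ncard +
      ∑ y ∈ Finset.univ.filter (· ∈ nbrInHat L b1), ((nbrOut L y).ncard : ℤ) +
      (nbrOut L b1).ncard + (nbrIn L a1).ncard := by
    exact_mod_cast ncard_labelArcs_one_le hL1
  rw [hL.sum_ncard_nbrOut, hL.ncard_labelArcs_one, hL.ncard_nbrOut, hL.ncard_nbrIn] at hunion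
  have hdm : (dm a1 : ℤ) ≤ rmax dm dp := by exact_mod_cast dm_le_rmax dm dp a1
  have hdp : (dp b1 : ℤ) ≤ rmax dm dp := by exact_mod_cast dp_le_rmax dm dp b1
  change _ ≤ ((secondArcs L a1 b1).ncard : ℤ)
  linarith [hL.sum_dp_nbrInHat_le b1]

end DirectedSwitchChain
end
end
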